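/- (Deterministic/pathwise form of Theorem 1(i).) Fix T > 0. Let q̄ be a (sufficiently smooth) solution of the filtered equation q̄_t + J(ψ̄, q̄) + βψ̄_x = f̄ + νΔq̄ − r q̄ + R, q̄ = Δψ̄, and let Q be a (sufficiently smooth) solution of Q_t + J(Ψ,Q) + βΨ_x = f̄ + νΔQ − rQ + s, Q = ΔΨ, both with zero boundary conditions on ∂D and the same initial condition q̄(·,·,0) = Q(·,·,0) = q̄₀, where R and s are given space-time forcing fields with ∫₀ᵀ ‖s(t)‖² dt ≤ M for some constant M = M(T). Then there is a constant C = C(ν, r, q̄₀, T, M, f̄) > 0 such that for all 0 ≤ t ≤ T, ‖q̄(t) − Q(t)‖² ≤ C ∫₀ᵀ ‖R(t) − s(t)‖² dt. -/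

import Mathlib

open MeasureTheory Real Filter Topology

/-- Partial derivative in the `x` direction. -/
noncomputable def pdx (u : ℝ × ℝ → ℝ) (p : ℝ × ℝ) : ℝ := fderiv ℝ u p (1, 0)

/-- Partial derivative in the `y` direction. -/
noncomputable def pdy (u : ℝ × ℝ → ℝ) (p : ℝ × ℝ) : ℝ := fderiv ℝ u p (0, 1)

/-- The Jacobian operator `J(u,v) = u_x v_y - u_y v_x`. -/
noncomputable def jac (u v : ℝ × ℝ → ℝ) (p : ℝ × ℝ) : ℝ :=
  pdx u p * pdy v p - pdy u p * pdx v p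

/-- The Laplacian `Δu = u_xx + u_yy`. -/
noncomputable def lap (u : ℝ × ℝ → ℝ) (p : ℝ × ℝ) : ℝ :=
  pdx (pdx u) p + pdy (pdy u) p

/-- The squared `L²(D)` norm `‖u‖² = ∫_D u² dxdy`. -/
noncomputable def l2sq (D : Set (ℝ × ℝ)) (u : ℝ × ℝ → ℝ) : ℝ :=
  ∫ p in D, (u p) ^ 2

/-- The `L²(D)` norm. -/
noncomputable def l2norm (D : Set (ℝ × ℝ)) (u : ℝ × ℝ → ℝ) : ℝ :=
  Real.sqrt (l2sq D u)

/-- The squared `L²(D)` norm of the gradient, `‖∇u‖² = ∫_D |∇u|² dxdy`. -/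
noncomputable def gradsq (D : Set (ℝ × ℝ)) (u : ℝ × ℝ → ℝ) : ℝ :=
  ∫ p in D, ((pdx u p) ^ 2 + (pdy u p) ^ 2)

/-- The `L²(D)` norm of the gradient. -/
noncomputable def gradNorm (D : Set (ℝ × ℝ)) (u : ℝ × ℝ → ℝ) : ℝ :=
  Real.sqrt (gradsq D u)

/-- The area `|D|` of the domain. -/
noncomputable def area (D : Set (ℝ × ℝ)) : ℝ := (volume D).toReal

/-- The constant `α = r/2 + πν/|D| - (|β|/2)(|D|/π + 1)`. -/
noncomputable def alphaConst (D : Set (ℝ × ℝ)) (β ν r : ℝ) : ℝ :=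
  r / 2 + π * ν / area D - |β| / 2 * (area D / π + 1)

/-- A space-time field that is smooth jointly in time and space. -/
def SmoothField (u : ℝ → ℝ × ℝ → ℝ) : Prop :=
  ContDiff ℝ (⊤ : ℕ∞) (Function.uncurry u)

/-- A space-time field that is mean-square integrable in space and time
(on the time interval `[0,∞)` and the spatial domain `D`). -/
def MeanSquareIntegrable (D : Set (ℝ × ℝ)) (f : ℝ → ℝ × ℝ → ℝ) : Prop :=
  (∀ t, 0 ≤ t → Integrable (fun p => (f t p) ^ 2) (volume.restrict D)) ∧
  (∀ T, 0 < T → IntervalIntegrable (fun t => l2sq D (f t)) volume 0 T)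

/-- `SolvesBVE D β ν r q ψ f g` says that the vorticity `q`, with streamfunction `ψ`,
solves the barotropic vorticity equation
`q_t + J(ψ,q) + β ψ_x = f + ν Δq - r q + g` on the domain `D` for all times `t ≥ 0`,
with the relation `q = Δψ` and zero boundary conditions `q = 0`, `ψ = 0` on `∂D`.
The extra field `g` is an additional forcing term (e.g. a subgrid-scale stress,
a stochastic parameterization, or `0`). -/
def SolvesBVE (D : Set (ℝ × ℝ)) (β ν r : ℝ) (q ψ f g : ℝ → ℝ × ℝ → ℝ) : Prop :=
  (∀ t, 0 ≤ t → ∀ p ∈ D, q t p = lap (ψ t) p) ∧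
  (∀ t, 0 ≤ t → ∀ p ∈ frontier D, q t p = 0 ∧ ψ t p = 0) ∧
  (∀ t, 0 ≤ t → ∀ p ∈ D,
    deriv (fun s => q s p) t + jac (ψ t) (q t) p + β * pdx (ψ t) p
      = f t p + ν * lap (q t) p - r * q t p + g t p)

open scoped ENNReal SchwartzMap FourierTransform LineDeriv

theorem sq_lintegral_mul_le {α : Type*} [MeasurableSpace α] (μ : Measure α) {f g : α → ℝ≥0∞}
    (hf : AEMeasurable f μ) (hg : AEMeasurable g μ) :
    (∫⁻ a, f a * g a ∂μ) ^ 2 ≤ (∫⁻ a, f a ^ 2 ∂μ) * ∫⁻ a, g a ^ 2 ∂μ := by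
  have h := ENNReal.lintegral_mul_le_Lp_mul_Lq μ Real.HolderConjugate.two_two hf hg
  have hs : ∀ x : ℝ≥0∞, (x ^ (1 / 2 : ℝ)) ^ 2 = x := fun x => by
    rw [← ENNReal.rpow_natCast, ← ENNReal.rpow_mul]; norm_num
  calc _ ≤ _ := pow_le_pow_left' h 2
    _ = _ := by
      rw [mul_pow, hs, hs]
      simp only [ENNReal.rpow_two]

/-- The square of the weighted norm `‖ |ξ| a ‖` in `L²(ℂ)`. -/
noncomputable def weightSq (a : ℂ → ℝ≥0∞) : ℝ≥0∞ := ∫⁻ ξ, (‖ξ‖ₑ * a ξ) ^ 2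

theorem volume_closedBall_norm (ξ : ℂ) :
    volume (Metric.closedBall (0 : ℂ) ‖ξ‖) = ‖ξ‖ₑ ^ 2 * ENNReal.ofReal π := by
  rw [Complex.volume_closedBall, ofReal_norm, ENNReal.ofReal_coe_nnreal.symm]
  rfl

theorem lintegral_low_shift {c : ℂ → ℝ≥0∞} (hc : Measurable c) :
    ∫⁻ p : ℂ × ℂ, ({p : ℂ × ℂ | ‖p.1‖ ≤ ‖p.1 + p.2‖}.indicator
      (fun p => c (-(p.1 + p.2))) p) ^ 2 ∂(volume.prod volume)
      = ENNReal.ofReal π * weightSq c := by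
  have hS : MeasurableSet {p : ℂ × ℂ | ‖p.1‖ ≤ ‖p.1 + p.2‖} :=
    measurableSet_le (by fun_prop) (by fun_prop)
  have hS' : MeasurableSet {p : ℂ × ℂ | ‖p.1‖ ≤ ‖p.2‖} :=
    measurableSet_le (by fun_prop) (by fun_prop)
  have hm : Measurable (fun p : ℂ × ℂ => c (-(p.1 + p.2))) := hc.comp (by fun_prop)
  have hm' : Measurable (fun p : ℂ × ℂ => c (-p.2)) := hc.comp (by fun_prop)
  have e1 : ∀ ξ η : ℂ, {p : ℂ × ℂ | ‖p.1‖ ≤ ‖p.1 + p.2‖}.indicator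
      (fun p => c (-(p.1 + p.2))) (ξ, η) = {p : ℂ × ℂ | ‖p.1‖ ≤ ‖p.2‖}.indicator
      (fun p => c (-p.2)) (ξ, ξ + η) := by
    intro ξ η; simp only [Set.indicator, Set.mem_ofPred_eq]
  rw [lintegral_prod _ ((hm.indicator hS).pow_const 2).aemeasurable]
  simp_rw [e1]
  simp_rw [fun ξ : ℂ => lintegral_add_left_eq_self (μ := (volume : Measure ℂ))
    (fun ζ => ({p : ℂ × ℂ | ‖p.1‖ ≤ ‖p.2‖}.indicator (fun p => c (-p.2)) (ξ, ζ)) ^ 2) ξ]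
  rw [lintegral_lintegral_swap ((hm'.indicator hS').pow_const 2).aemeasurable]
  have e2 : ∀ ζ : ℂ, ∫⁻ ξ : ℂ,
      ({p : ℂ × ℂ | ‖p.1‖ ≤ ‖p.2‖}.indicator (fun p => c (-p.2)) (ξ, ζ)) ^ 2
      = ENNReal.ofReal π * (‖-ζ‖ₑ * c (-ζ)) ^ 2 := by
    intro ζ
    have : ∀ ξ : ℂ, ({p : ℂ × ℂ | ‖p.1‖ ≤ ‖p.2‖}.indicator (fun p => c (-p.2)) (ξ, ζ)) ^ 2
        = (Metric.closedBall (0 : ℂ) ‖ζ‖).indicator (fun _ => c (-ζ) ^ 2) ξ := by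
      intro ξ
      by_cases h : ‖ξ‖ ≤ ‖ζ‖ <;> simp [Set.indicator, h]
    simp_rw [this]
    rw [lintegral_indicator_const Metric.isClosed_closedBall.measurableSet,
      volume_closedBall_norm, enorm_neg]
    ring
  simp_rw [e2]
  rw [lintegral_neg_eq_self (fun ζ : ℂ => ENNReal.ofReal π * (‖ζ‖ₑ * c ζ) ^ 2),
    lintegral_const_mul' _ _ ENNReal.ofReal_ne_top, weightSq]

theorem lintegral_high_shift {a : ℂ → ℝ≥0∞} (ha : Measurable a) :
    ∫⁻ p : ℂ × ℂ, ({p : ℂ × ℂ | ‖p.1 + p.2‖ ≤ ‖p.1‖}.indicator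
      (fun p => a p.1) p) ^ 2 ∂(volume.prod volume)
      = ENNReal.ofReal π * weightSq a := by
  have hS : MeasurableSet {p : ℂ × ℂ | ‖p.1 + p.2‖ ≤ ‖p.1‖} :=
    measurableSet_le (by fun_prop) (by fun_prop)
  have hm : Measurable (fun p : ℂ × ℂ => a p.1) := ha.comp (by fun_prop)
  rw [lintegral_prod _ ((hm.indicator hS).pow_const 2).aemeasurable]
  have e2 : ∀ ξ : ℂ, ∫⁻ η : ℂ,
      ({p : ℂ × ℂ | ‖p.1 + p.2‖ ≤ ‖p.1‖}.indicator (fun p => a p.1) (ξ, η)) ^ 2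
      = ENNReal.ofReal π * (‖ξ‖ₑ * a ξ) ^ 2 := by
    intro ξ
    have : ∀ η : ℂ, ({p : ℂ × ℂ | ‖p.1 + p.2‖ ≤ ‖p.1‖}.indicator (fun p => a p.1) (ξ, η)) ^ 2
        = (Metric.closedBall (0 : ℂ) ‖ξ‖).indicator (fun _ => a ξ ^ 2) (ξ + η) := by
      intro η
      by_cases h : ‖ξ + η‖ ≤ ‖ξ‖ <;> simp [Set.indicator, h]
    simp_rw [this]
    rw [lintegral_add_left_eq_self (μ := (volume : Measure ℂ))
        ((Metric.closedBall (0 : ℂ) ‖ξ‖).indicator (fun _ => a ξ ^ 2)) ξ,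
      lintegral_indicator_const Metric.isClosed_closedBall.measurableSet, volume_closedBall_norm]
    ring
  simp_rw [e2]
  rw [lintegral_const_mul' _ _ ENNReal.ofReal_ne_top, weightSq]

theorem enorm_cross_le (ξ η : ℂ) : ‖ξ.re * η.im - ξ.im * η.re‖ₑ ≤ ‖ξ‖ₑ * ‖η‖ₑ := by
  have h : ξ.re * η.im - ξ.im * η.re = (starRingEnd ℂ ξ * η).im := by simp; ring
  rw [h]
  calc _ ≤ ‖starRingEnd ℂ ξ * η‖ₑ := by
        rw [enorm_le_iff_norm_le]; exact Complex.abs_im_le_norm _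
    _ = _ := by rw [enorm_mul, RCLike.enorm_conj]

theorem enorm_cross_le' (ξ η : ℂ) : ‖ξ.re * η.im - ξ.im * η.re‖ₑ ≤ ‖-(ξ + η)‖ₑ * ‖η‖ₑ := by
  have h := enorm_cross_le (ξ + η) η
  rw [enorm_neg]
  convert h using 2
  simp; ring

theorem trilinear_bound {a b c : ℂ → ℝ≥0∞} (ha : Measurable a) (hb : Measurable b)
    (hc : Measurable c) :
    (∫⁻ p : ℂ × ℂ, ‖p.1.re * p.2.im - p.1.im * p.2.re‖ₑ * (a p.1 * b p.2 * c (-(p.1 + p.2)))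
      ∂(volume.prod volume)) ^ 2
      ≤ 4 * (ENNReal.ofReal π * (weightSq a * weightSq b * weightSq c)) := by
  have hS : MeasurableSet {p : ℂ × ℂ | ‖p.1‖ ≤ ‖p.1 + p.2‖} :=
    measurableSet_le (by fun_prop) (by fun_prop)
  have hS' : MeasurableSet {p : ℂ × ℂ | ‖p.1 + p.2‖ ≤ ‖p.1‖} :=
    measurableSet_le (by fun_prop) (by fun_prop)
  have hm : Measurable (fun p : ℂ × ℂ => c (-(p.1 + p.2))) := hc.comp (by fun_prop)
  have hm1 : Measurable (fun p : ℂ × ℂ => a p.1) := ha.comp (by fun_prop)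
  have hm2 : Measurable (fun p : ℂ × ℂ => b p.2) := hb.comp (by fun_prop)
  have hf1 : Measurable (fun p : ℂ × ℂ => (‖p.1‖ₑ * a p.1) * (‖p.2‖ₑ * b p.2)) := by fun_prop
  have hf2 : Measurable (fun p : ℂ × ℂ =>
      (‖-(p.1 + p.2)‖ₑ * c (-(p.1 + p.2))) * (‖p.2‖ₑ * b p.2)) := by fun_prop
  have i1 : ∫⁻ p : ℂ × ℂ, ((‖p.1‖ₑ * a p.1) * (‖p.2‖ₑ * b p.2)) ^ 2 ∂(volume.prod volume)
      = weightSq a * weightSq b := by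
    simp_rw [mul_pow _ (‖_‖ₑ * b _)]
    rw [lintegral_prod_mul (f := fun ξ => (‖ξ‖ₑ * a ξ) ^ 2) (g := fun ξ => (‖ξ‖ₑ * b ξ) ^ 2)
      (by fun_prop) (by fun_prop), weightSq, weightSq]
  have i2 : ∫⁻ p : ℂ × ℂ, ((‖-(p.1 + p.2)‖ₑ * c (-(p.1 + p.2))) * (‖p.2‖ₑ * b p.2)) ^ 2
      ∂(volume.prod volume) = weightSq c * weightSq b := by
    rw [lintegral_prod_symm _ (by fun_prop)]
    have : ∀ η : ℂ, ∫⁻ ξ : ℂ, ((‖-(ξ + η)‖ₑ * c (-(ξ + η))) * (‖η‖ₑ * b η)) ^ 2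
        = weightSq c * (‖η‖ₑ * b η) ^ 2 := by
      intro η
      simp_rw [mul_pow _ (‖_‖ₑ * b _)]
      rw [lintegral_mul_const _ (by fun_prop)]
      rw [lintegral_add_right_eq_self (μ := (volume : Measure ℂ))
        (fun ζ => (‖-ζ‖ₑ * c (-ζ)) ^ 2) η,
        lintegral_neg_eq_self (fun ζ : ℂ => (‖ζ‖ₑ * c ζ) ^ 2), weightSq]
    simp_rw [this]
    rw [lintegral_const_mul _ (by fun_prop), weightSq, weightSq]
  set X := ∫⁻ p : ℂ × ℂ, ((‖p.1‖ₑ * a p.1) * (‖p.2‖ₑ * b p.2)) *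
    {p : ℂ × ℂ | ‖p.1‖ ≤ ‖p.1 + p.2‖}.indicator (fun p => c (-(p.1 + p.2))) p
    ∂(volume.prod volume) with hX
  set Y := ∫⁻ p : ℂ × ℂ, ((‖-(p.1 + p.2)‖ₑ * c (-(p.1 + p.2))) * (‖p.2‖ₑ * b p.2)) *
    {p : ℂ × ℂ | ‖p.1 + p.2‖ ≤ ‖p.1‖}.indicator (fun p => a p.1) p
    ∂(volume.prod volume) with hY
  have hXb : X ^ 2 ≤ ENNReal.ofReal π * (weightSq a * weightSq b * weightSq c) := by
    refine (sq_lintegral_mul_le _ hf1.aemeasurable (hm.indicator hS).aemeasurable).trans_eq ?_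
    rw [i1, lintegral_low_shift hc]; ring
  have hYb : Y ^ 2 ≤ ENNReal.ofReal π * (weightSq a * weightSq b * weightSq c) := by
    refine (sq_lintegral_mul_le _ hf2.aemeasurable (hm1.indicator hS').aemeasurable).trans_eq ?_
    rw [i2, lintegral_high_shift ha]; ring
  have hXY : (∫⁻ p : ℂ × ℂ, ‖p.1.re * p.2.im - p.1.im * p.2.re‖ₑ *
      (a p.1 * b p.2 * c (-(p.1 + p.2))) ∂(volume.prod volume)) ≤ X + Y := by
    have hm3 : Measurable (fun p : ℂ × ℂ => ((‖p.1‖ₑ * a p.1) * (‖p.2‖ₑ * b p.2)) *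
      {p : ℂ × ℂ | ‖p.1‖ ≤ ‖p.1 + p.2‖}.indicator (fun p => c (-(p.1 + p.2))) p) :=
      hf1.mul (hm.indicator hS)
    rw [hX, hY, ← lintegral_add_left hm3]
    refine lintegral_mono fun p => ?_
    by_cases h : ‖p.1‖ ≤ ‖p.1 + p.2‖
    · refine le_trans ?_ (le_add_right le_rfl)
      rw [Set.indicator_of_mem (by exact h)]
      calc _ ≤ (‖p.1‖ₑ * ‖p.2‖ₑ) * (a p.1 * b p.2 * c (-(p.1 + p.2))) := by
            gcongr; exact enorm_cross_le _ _
        _ = _ := by ring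
    · refine le_trans ?_ (le_add_left le_rfl)
      rw [Set.indicator_of_mem (by exact (not_le.1 h).le)]
      calc _ ≤ (‖-(p.1 + p.2)‖ₑ * ‖p.2‖ₑ) * (a p.1 * b p.2 * c (-(p.1 + p.2))) := by
            gcongr; exact enorm_cross_le' _ _
        _ = _ := by ring
  have hmax : X + Y ≤ 2 * max X Y := by
    rw [two_mul]; exact add_le_add (le_max_left _ _) (le_max_right _ _)
  calc _ ≤ (2 * max X Y) ^ 2 := pow_le_pow_left' (hXY.trans hmax) 2
    _ = 4 * max X Y ^ 2 := by rw [mul_pow]; norm_num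
    _ ≤ _ := by
      gcongr
      rcases max_choice X Y with h | h <;> rw [h] <;> assumption

theorem integral_mul_mul_eq_fourier (F G H : 𝓢(ℂ, ℂ)) :
    ∫ x, F x * G x * H x
      = ∫ p : ℂ × ℂ, 𝓕 F p.1 * 𝓕 G p.2 * 𝓕 H (-(p.1 + p.2)) ∂(volume.prod volume) := by
  have hinv : ∀ (F : 𝓢(ℂ, ℂ)) (x : ℂ), F x = ∫ ξ, 𝐞 (inner ℝ ξ x) • 𝓕 F ξ := by
    intro F x
    have h : 𝓕⁻ (𝓕 F) = F := FourierTransform.fourierInv_fourier_eq F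
    conv_lhs => rw [← h]
    rw [SchwartzMap.fourierInv_coe, Real.fourierInv_eq]
  have hFG : ∀ x : ℂ, F x * G x * H x = ∫ p : ℂ × ℂ,
      (𝐞 (inner ℝ p.1 x) • 𝓕 F p.1) * (𝐞 (inner ℝ p.2 x) • 𝓕 G p.2) * H x
        ∂(volume.prod volume) := by
    intro x
    rw [integral_mul_const, integral_prod_mul (fun ξ => 𝐞 (inner ℝ ξ x) • 𝓕 F ξ)
      (fun ξ => 𝐞 (inner ℝ ξ x) • 𝓕 G ξ), ← hinv F x, ← hinv G x]
  simp_rw [hFG]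
  rw [integral_integral_swap]
  · refine integral_congr_ae (Eventually.of_forall fun p => ?_)
    have : 𝓕 H (-(p.1 + p.2)) = ∫ x, 𝐞 (inner ℝ p.1 x) • 𝐞 (inner ℝ p.2 x) • H x := by
      rw [SchwartzMap.fourier_coe, Real.fourier_eq]
      refine integral_congr_ae (Eventually.of_forall fun x => ?_)
      simp only [smul_smul, ← AddChar.map_add_eq_mul]
      congr 2
      rw [real_inner_comm, inner_neg_left, inner_add_left, neg_neg]
    simp only [this, ← integral_const_mul]
    refine integral_congr_ae (Eventually.of_forall fun x => ?_)
    simp only [Circle.smul_def, smul_eq_mul]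
    ring
  · have h := (H.integrable (μ := volume)).mul_prod
      (((𝓕 F).integrable (μ := volume)).mul_prod ((𝓕 G).integrable (μ := volume)))
    refine h.mono ?_ (Eventually.of_forall fun q => ?_)
    · refine Continuous.aestronglyMeasurable ?_
      have h1 := F.continuous
      have h2 := (𝓕 F).continuous
      have h3 := (𝓕 G).continuous
      have h4 := H.continuous
      simp only [Function.uncurry_def]
      have h5 : Continuous (fun t : ℝ => (𝐞 t : ℂ)) :=
        continuous_subtype_val.comp Real.continuous_fourierChar
      simp only [Circle.smul_def]
      fun_prop
    · simp [Function.uncurry_def]; ring_nf; rfl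

theorem fourier_lineDeriv_apply (f : 𝓢(ℂ, ℂ)) (m ξ : ℂ) :
    𝓕 (∂_{m} f) ξ = (2 * π * Complex.I) * (inner ℝ ξ m * 𝓕 f ξ) := by
  have : (inner ℝ · m : ℂ → ℝ).HasTemperateGrowth := by fun_prop
  rw [SchwartzMap.fourier_lineDerivOp_eq, smul_apply,
    SchwartzMap.smulLeftCLM_apply_apply this, Complex.real_smul, smul_eq_mul]

/-- The squared `L²` norm of the gradient of a Schwartz function on `ℂ`. -/
noncomputable def dirichletSq (f : 𝓢(ℂ, ℂ)) : ℝ :=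
  ∫ x, (‖∂_{(1 : ℂ)} f x‖ ^ 2 + ‖∂_{Complex.I} f x‖ ^ 2)

theorem integrable_norm_sq (f : 𝓢(ℂ, ℂ)) : Integrable (fun x => ‖f x‖ ^ 2) :=
  (f.memLp 2).integrable_norm_pow two_ne_zero

theorem weightSq_fourier (f : 𝓢(ℂ, ℂ)) :
    ENNReal.ofReal (4 * π ^ 2) * weightSq (fun ξ => ‖𝓕 f ξ‖ₑ) = ENNReal.ofReal (dirichletSq f) := by
  have h : dirichletSq f = ∫ ξ, 4 * π ^ 2 * (‖ξ‖ * ‖𝓕 f ξ‖) ^ 2 := by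
    rw [dirichletSq, integral_add (integrable_norm_sq _) (integrable_norm_sq _),
      ← SchwartzMap.integral_norm_sq_fourier (∂_{(1 : ℂ)} f),
      ← SchwartzMap.integral_norm_sq_fourier (∂_{Complex.I} f),
      ← integral_add (integrable_norm_sq _) (integrable_norm_sq _)]
    congr 1 with ξ
    rw [fourier_lineDeriv_apply, fourier_lineDeriv_apply]
    simp only [norm_mul, Complex.norm_I, Complex.norm_real, Complex.inner]
    simp [mul_pow, ← Complex.normSq_eq_norm_sq, Complex.normSq_apply]
    ring
  have hi : Integrable (fun ξ => 4 * π ^ 2 * (‖ξ‖ * ‖𝓕 f ξ‖) ^ 2) := by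
    refine ((integrable_norm_sq (𝓕 (∂_{(1 : ℂ)} f))).add
      (integrable_norm_sq (𝓕 (∂_{Complex.I} f)))).congr (Eventually.of_forall fun ξ => ?_)
    simp only [Pi.add_apply]
    rw [fourier_lineDeriv_apply, fourier_lineDeriv_apply]
    simp only [norm_mul, Complex.norm_I, Complex.norm_real, Complex.inner]
    simp [mul_pow, ← Complex.normSq_eq_norm_sq, Complex.normSq_apply]
    ring
  rw [h, ofReal_integral_eq_lintegral_ofReal hi (Eventually.of_forall fun ξ => by positivity),
    weightSq, ← lintegral_const_mul' _ _ ENNReal.ofReal_ne_top]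
  refine lintegral_congr fun ξ => ?_
  rw [ENNReal.ofReal_mul (p := 4 * π ^ 2) (by positivity), ENNReal.ofReal_pow (p := ‖ξ‖ * _) (by positivity),
    ENNReal.ofReal_mul (p := ‖ξ‖) (by positivity), ofReal_norm, ofReal_norm]

/-- **Wente's inequality** for Schwartz functions. -/
theorem wente_schwartz (f g h : 𝓢(ℂ, ℂ)) :
    ‖∫ x, (∂_{(1 : ℂ)} f x * ∂_{Complex.I} g x - ∂_{Complex.I} f x * ∂_{(1 : ℂ)} g x) * h x‖ ^ 2
      ≤ dirichletSq f * dirichletSq g * dirichletSq h := by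
  have hint : ∀ F G H : 𝓢(ℂ, ℂ), Integrable (fun x => F x * G x * H x) := by
    intro F G H
    refine H.integrable.bdd_mul (c := SchwartzMap.seminorm ℝ 0 0 F * SchwartzMap.seminorm ℝ 0 0 G)
      (F.continuous.mul G.continuous).aestronglyMeasurable (Eventually.of_forall fun x => ?_)
    rw [norm_mul]
    exact mul_le_mul (SchwartzMap.norm_le_seminorm ℝ _ _) (SchwartzMap.norm_le_seminorm ℝ _ _)
      (norm_nonneg _) ((norm_nonneg _).trans (SchwartzMap.norm_le_seminorm ℝ F x))
  have hint' : ∀ F G H : 𝓢(ℂ, ℂ), Integrable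
      (fun p : ℂ × ℂ => 𝓕 F p.1 * 𝓕 G p.2 * 𝓕 H (-(p.1 + p.2))) (volume.prod volume) := by
    intro F G H
    refine (((𝓕 F).integrable (μ := volume)).mul_prod
      ((𝓕 G).integrable (μ := volume))).mul_bdd (c := SchwartzMap.seminorm ℝ 0 0 (𝓕 H)) ?_ ?_
    · exact ((𝓕 H).continuous.comp (by fun_prop)).aestronglyMeasurable
    · exact Eventually.of_forall fun p => SchwartzMap.norm_le_seminorm ℝ _ _
  have key : ∫ x, (∂_{(1 : ℂ)} f x * ∂_{Complex.I} g x - ∂_{Complex.I} f x * ∂_{(1 : ℂ)} g x) * h x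
      = ∫ p : ℂ × ℂ, -(4 * π ^ 2 : ℂ) * (((p.1.re * p.2.im - p.1.im * p.2.re : ℝ) : ℂ) *
        (𝓕 f p.1 * 𝓕 g p.2 * 𝓕 h (-(p.1 + p.2)))) ∂(volume.prod volume) := by
    simp_rw [sub_mul]
    rw [integral_sub (hint _ _ _) (hint _ _ _), integral_mul_mul_eq_fourier,
      integral_mul_mul_eq_fourier, ← integral_sub (hint' _ _ _) (hint' _ _ _)]
    congr 1 with p
    simp only [fourier_lineDeriv_apply, Complex.inner]
    simp
    linear_combination (4 * π ^ 2 * (p.1.re * p.2.im - p.1.im * p.2.re) *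
        (𝓕 f p.1 * 𝓕 g p.2 * 𝓕 h (-p.2 + -p.1)) : ℂ) * Complex.I_sq
  rw [key, integral_const_mul, norm_mul, mul_pow]
  have hb := trilinear_bound (a := fun ξ => ‖𝓕 f ξ‖ₑ) (b := fun ξ => ‖𝓕 g ξ‖ₑ)
    (c := fun ξ => ‖𝓕 h ξ‖ₑ) (𝓕 f).continuous.enorm.measurable
    (𝓕 g).continuous.enorm.measurable (𝓕 h).continuous.enorm.measurable
  have hJ : ‖∫ p : ℂ × ℂ, (((p.1.re * p.2.im - p.1.im * p.2.re : ℝ) : ℂ) *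
        (𝓕 f p.1 * 𝓕 g p.2 * 𝓕 h (-(p.1 + p.2)))) ∂(volume.prod volume)‖ₑ ≤ _ :=
    enorm_integral_le_lintegral_enorm _
  have hre : ∀ x : ℝ, ‖(x : ℂ)‖ₑ = ‖x‖ₑ := fun x => by
    rw [← ofReal_norm, ← ofReal_norm, Complex.norm_real]
  simp only [enorm_mul, hre] at hJ
  have h2 := (pow_le_pow_left' hJ 2).trans hb
  have hnn : ∀ f, 0 ≤ dirichletSq f := fun f => integral_nonneg fun x => by positivity
  have hc : ENNReal.ofReal (‖(-(4 * π ^ 2 : ℂ))‖ ^ 2) = ENNReal.ofReal (4 * π ^ 2) ^ 2 := by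
    rw [← ENNReal.ofReal_pow (by positivity)]
    simp
  rw [← ENNReal.ofReal_le_ofReal_iff (by have := hnn f; have := hnn g; have := hnn h; positivity),
    ENNReal.ofReal_mul (by positivity), ENNReal.ofReal_mul (by have := hnn f; have := hnn g; positivity),
    ENNReal.ofReal_mul (hnn f), ← weightSq_fourier, ← weightSq_fourier, ← weightSq_fourier,
    hc, ENNReal.ofReal_pow (norm_nonneg _) 2, ofReal_norm]
  have hpi : 4 * ENNReal.ofReal π ≤ ENNReal.ofReal (4 * π ^ 2) := by
    rw [show (4 : ℝ≥0∞) = ENNReal.ofReal 4 by simp, ← ENNReal.ofReal_mul (by norm_num)]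
    exact ENNReal.ofReal_le_ofReal (by nlinarith [Real.pi_gt_three])
  refine (mul_le_mul_right h2 _).trans ?_
  rw [← mul_assoc 4]
  refine (mul_le_mul_right (mul_le_mul_left hpi _) _).trans_eq ?_
  ring

theorem wente_of_hasCompactSupport {a b c : ℝ × ℝ → ℝ}
    (ha : ContDiff ℝ (⊤ : ℕ∞) a) (ha' : HasCompactSupport a)
    (hb : ContDiff ℝ (⊤ : ℕ∞) b) (hb' : HasCompactSupport b)
    (hc : ContDiff ℝ (⊤ : ℕ∞) c) (hc' : HasCompactSupport c) :
    (∫ p, jac a b p * c p) ^ 2 ≤ (∫ p, (pdx a p ^ 2 + pdy a p ^ 2)) *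
      (∫ p, (pdx b p ^ 2 + pdy b p ^ 2)) * ∫ p, (pdx c p ^ 2 + pdy c p ^ 2) := by
  have lift : ∀ a : ℝ × ℝ → ℝ, ContDiff ℝ (⊤ : ℕ∞) a → HasCompactSupport a →
      ∃ f : 𝓢(ℂ, ℂ), (∀ z, f z = a (Complex.measurableEquivRealProd z)) ∧
        (∀ z, ∂_{(1 : ℂ)} f z = pdx a (Complex.measurableEquivRealProd z)) ∧
        (∀ z, ∂_{Complex.I} f z = pdy a (Complex.measurableEquivRealProd z)) := by
    intro a ha ha'
    have hs : ContDiff ℝ (⊤ : ℕ∞) (fun z : ℂ => ((a (Complex.equivRealProdCLM z) : ℝ) : ℂ)) :=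
      Complex.ofRealCLM.contDiff.comp (ha.comp Complex.equivRealProdCLM.contDiff)
    have hk : HasCompactSupport (fun z : ℂ => ((a (Complex.equivRealProdCLM z) : ℝ) : ℂ)) :=
      (ha'.comp_homeomorph Complex.equivRealProdCLM.toHomeomorph).comp_left
        (g := fun x : ℝ => (x : ℂ)) Complex.ofReal_zero
    have hd : ∀ z, HasFDerivAt (fun z : ℂ => ((a (Complex.equivRealProdCLM z) : ℝ) : ℂ))
        (Complex.ofRealCLM.comp ((fderiv ℝ a (Complex.equivRealProdCLM z)).comp
          (Complex.equivRealProdCLM : ℂ →L[ℝ] ℝ × ℝ))) z := fun z =>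
      Complex.ofRealCLM.hasFDerivAt.comp z
        (((ha.differentiable (by simp)) _).hasFDerivAt.comp z
          Complex.equivRealProdCLM.hasFDerivAt)
    refine ⟨hk.toSchwartzMap hs, fun z => rfl, fun z => ?_, fun z => ?_⟩
    · rw [SchwartzMap.lineDerivOp_apply_eq_fderiv]
      erw [(hd z).fderiv]
      simp [pdx]
    · rw [SchwartzMap.lineDerivOp_apply_eq_fderiv]
      erw [(hd z).fderiv]
      simp [pdy]
  obtain ⟨f, f0, f1, f2⟩ := lift a ha ha'
  obtain ⟨g, g0, g1, g2⟩ := lift b hb hb'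
  obtain ⟨h, h0, h1, h2⟩ := lift c hc hc'
  have e := Complex.measurableEquivRealProd.measurableEmbedding
  have hdir : ∀ (f : 𝓢(ℂ, ℂ)) (a : ℝ × ℝ → ℝ),
      (∀ z, ∂_{(1 : ℂ)} f z = pdx a (Complex.measurableEquivRealProd z)) →
      (∀ z, ∂_{Complex.I} f z = pdy a (Complex.measurableEquivRealProd z)) →
      dirichletSq f = ∫ p, (pdx a p ^ 2 + pdy a p ^ 2) := by
    intro f a h1 h2
    rw [dirichletSq, ← Complex.volume_preserving_equiv_real_prod.integral_comp e]
    simp [h1, h2]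
  have key := wente_schwartz f g h
  rw [hdir f a f1 f2, hdir g b g1 g2, hdir h c h1 h2] at key
  refine le_trans (le_of_eq ?_) key
  rw [← Complex.volume_preserving_equiv_real_prod.integral_comp e, ← sq_abs, ← Real.norm_eq_abs,
    ← Complex.norm_real, ← integral_complex_ofReal]
  congr 3
  ext z
  rw [f1, f2, g1, g2, h0]
  simp [jac]

/-- The gradient of a smooth function vanishes almost everywhere on its zero set. -/
theorem ae_fderiv_eq_zero_of_eq_zero {u : ℝ × ℝ → ℝ} (hu : ContDiff ℝ (⊤ : ℕ∞) u) :
    ∀ᵐ p, u p = 0 → fderiv ℝ u p = 0 := by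
  have hball : ∀ n : ℕ, ∀ᵐ p : ℝ × ℝ, p ∈ Metric.ball (0 : ℝ × ℝ) n →
      DifferentiableWithinAt ℝ (fun p => |u p|) (Metric.ball 0 n) p := by
    intro n
    have hcont : ContinuousOn (fun p => ‖fderiv ℝ u p‖) (Metric.closedBall (0 : ℝ × ℝ) n) :=
      (hu.continuous_fderiv (by simp)).norm.continuousOn
    obtain ⟨C, hC⟩ := (isCompact_closedBall (0 : ℝ × ℝ) (n : ℝ)).bddAbove_image hcont
    have hlip : LipschitzOnWith (Real.toNNReal C) u (Metric.ball (0 : ℝ × ℝ) n) := by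
      refine (convex_ball _ _).lipschitzOnWith_of_nnnorm_fderiv_le
        (fun p _ => hu.differentiable (by simp) p) fun p hp => ?_
      rw [← NNReal.coe_le_coe, coe_nnnorm]
      exact (hC (Set.mem_image_of_mem _ (Metric.ball_subset_closedBall hp))).trans
        (Real.le_coe_toNNReal C)
    exact ((lipschitzWith_one_norm (E := ℝ)).comp_lipschitzOnWith
      hlip).ae_differentiableWithinAt_of_mem
  filter_upwards [ae_all_iff.2 hball] with p hp h0
  obtain ⟨n, hn⟩ := exists_nat_gt ‖p‖
  have hpn : p ∈ Metric.ball (0 : ℝ × ℝ) n := by simpa using hn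
  have hd : DifferentiableAt ℝ (fun p => |u p|) p :=
    (hp n hpn).differentiableAt (Metric.isOpen_ball.mem_nhds hpn)
  have hmin : IsLocalMin (fun p => |u p|) p :=
    Eventually.of_forall fun q => by simp [h0]
  have hz : HasFDerivAt (fun p => |u p|) (0 : ℝ × ℝ →L[ℝ] ℝ) p := by
    rw [← hmin.fderiv_eq_zero]; exact hd.hasFDerivAt
  have hz' : HasFDerivAt u (0 : ℝ × ℝ →L[ℝ] ℝ) p := by
    rw [hasFDerivAt_iff_isLittleO] at hz ⊢
    refine (Asymptotics.isLittleO_iff.2 fun ε hε => ?_)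
    filter_upwards [Asymptotics.isLittleO_iff.1 hz hε] with q hq
    simpa [h0] using hq
  exact hz'.fderiv

/-- A smooth truncation: it vanishes near the origin and is the identity far away. -/
theorem exists_truncation : ∃ θ : ℝ → ℝ, ContDiff ℝ (⊤ : ℕ∞) θ ∧ (∀ x, |x| ≤ 1 → θ x = 0) ∧
    (∀ x, 2 ≤ |x| → θ x = x) ∧ (∀ x, |θ x| ≤ |x|) ∧ ∃ K, 0 ≤ K ∧ ∀ x, |deriv θ x| ≤ K := by
  let f : ContDiffBump (0 : ℝ) := ⟨1, 2, one_pos, one_lt_two⟩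
  have hxf : ContDiff ℝ (⊤ : ℕ∞) (fun x => x * f x) := contDiff_id.mul f.contDiff
  have hsupp : HasCompactSupport (fun x => x * f x) := f.hasCompactSupport.mul_left
  have hθ : ContDiff ℝ (⊤ : ℕ∞) (fun x => x - x * f x) := contDiff_id.sub hxf
  obtain ⟨K, hK⟩ := (hxf.continuous_deriv (by simp)).bounded_above_of_compact_support hsupp.deriv
  refine ⟨fun x => x - x * f x, hθ, fun x hx => ?_, fun x hx => ?_, fun x => ?_, 1 + K, ?_,
    fun x => ?_⟩
  · have : f x = 1 := f.one_of_mem_closedBall (by simpa using hx)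
    simp [this]
  · have : f x = 0 := f.zero_of_le_dist (by simpa using hx)
    simp [this]
  · have h : x - x * f x = x * (1 - f x) := by ring
    change |x - x * f x| ≤ |x|
    rw [h, abs_mul]
    have h0 := f.nonneg (x := x)
    have h1 := f.le_one (x := x)
    exact mul_le_of_le_one_right (abs_nonneg _) (abs_le.2 ⟨by linarith, by linarith⟩)
  · have := (norm_nonneg _).trans (hK 0); linarith
  · rw [deriv_fun_sub differentiableAt_fun_id (hxf.differentiable (by simp) x)]
    have := hK x
    rw [Real.norm_eq_abs] at this
    calc _ ≤ |deriv (fun x : ℝ => x) x| + |deriv (fun x => x * f x) x| := abs_sub _ _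
      _ ≤ _ := by simpa using this

theorem eventually_abs_lt_of_notMem {D : Set (ℝ × ℝ)} (hD : IsOpen D) {u : ℝ × ℝ → ℝ}
    (hu : Continuous u) (hu0 : ∀ p ∈ frontier D, u p = 0) {δ : ℝ} (hδ : 0 < δ) {p : ℝ × ℝ}
    (hp : p ∉ D) : ∀ᶠ q in 𝓝 p, q ∈ D → |u q| < δ := by
  by_cases hpc : p ∈ closure D
  · have h0 : u p = 0 := hu0 p ⟨hpc, by rwa [hD.interior_eq]⟩
    have : ∀ᶠ q in 𝓝 p, |u q| < δ :=
      hu.abs.continuousAt.eventually_lt continuousAt_const (by simpa [h0] using hδ)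
    exact this.mono fun q hq _ => hq
  · filter_upwards [isClosed_closure.isOpen_compl.mem_nhds hpc] with q hq hqD
    exact absurd (subset_closure hqD) hq

/-- A smooth function vanishing on the boundary of a bounded open set is approximated, together
with its gradient, by smooth functions compactly supported in the closure. -/
theorem exists_compactly_supported_approx {D : Set (ℝ × ℝ)} (hD : IsOpen D)
    (hDb : Bornology.IsBounded D) {u : ℝ × ℝ → ℝ} (hu : ContDiff ℝ (⊤ : ℕ∞) u)
    (hu0 : ∀ p ∈ frontier D, u p = 0) :
    ∃ (U : ℕ → ℝ × ℝ → ℝ) (K : ℝ), 0 ≤ K ∧ (∀ n, ContDiff ℝ (⊤ : ℕ∞) (U n)) ∧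
      (∀ n, HasCompactSupport (U n)) ∧
      (∀ n p, |U n p| ≤ D.indicator (fun p => |u p|) p) ∧
      (∀ n p, ‖fderiv ℝ (U n) p‖ ≤ D.indicator (fun p => K * ‖fderiv ℝ u p‖) p) ∧
      (∀ p, Tendsto (fun n => U n p) atTop (𝓝 (D.indicator u p))) ∧
      (∀ᵐ p, Tendsto (fun n => fderiv ℝ (U n) p) atTop (𝓝 (D.indicator (fderiv ℝ u) p))) := by
  obtain ⟨θ, hθ, hθ0, hθ1, hθle, K, hK0, hK⟩ := exists_truncation
  let N : ℕ → ℝ := fun n => n + 1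
  have hN : ∀ n, 0 < N n := fun n => by positivity
  let V : ℕ → ℝ × ℝ → ℝ := fun n p => (N n)⁻¹ * θ (N n * u p)
  have hV : ∀ n, ContDiff ℝ (⊤ : ℕ∞) (V n) := fun n =>
    contDiff_const.mul (hθ.comp (contDiff_const.mul hu))
  have hVd : ∀ n p, HasFDerivAt (V n) (deriv θ (N n * u p) • fderiv ℝ u p) p := by
    intro n p
    have h1 := (hθ.differentiable (by simp) (N n * u p)).hasDerivAt.comp_hasFDerivAt p
      ((hu.differentiable (by simp) p).hasFDerivAt.const_mul (N n))
    refine (h1.const_mul (N n)⁻¹).congr_fderiv ?_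
    rw [smul_smul, smul_smul]
    congr 1
    have := (hN n).ne'
    field_simp
  have hin : ∀ n, ∀ p ∈ D, D.indicator (V n) =ᶠ[𝓝 p] V n := fun n p hp => by
    filter_upwards [hD.mem_nhds hp] with q hq
    exact Set.indicator_of_mem hq _
  have hout : ∀ n, ∀ p ∉ D, D.indicator (V n) =ᶠ[𝓝 p] fun _ => 0 := fun n p hp => by
    filter_upwards [eventually_abs_lt_of_notMem hD hu.continuous hu0
      (inv_pos.2 (hN n)) hp] with q hq
    by_cases hqD : q ∈ D
    · rw [Set.indicator_of_mem hqD]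
      have : |N n * u q| ≤ 1 := by
        rw [abs_mul, abs_of_pos (hN n)]
        exact ((lt_inv_mul_iff₀ (hN n)).1 (by simpa using hq hqD)).le
      simp [V, hθ0 _ this]
    · exact Set.indicator_of_notMem hqD _
  have hfd : ∀ n p, fderiv ℝ (D.indicator (V n)) p
      = D.indicator (fun p => deriv θ (N n * u p) • fderiv ℝ u p) p := by
    intro n p
    by_cases hp : p ∈ D
    · rw [(hin n p hp).fderiv_eq, (hVd n p).fderiv, Set.indicator_of_mem hp]
    · rw [(hout n p hp).fderiv_eq, Set.indicator_of_notMem hp]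
      simp
  refine ⟨fun n => D.indicator (V n), K, hK0, fun n => ?_, fun n => ?_, fun n p => ?_,
    fun n p => ?_, fun p => ?_, ?_⟩
  · rw [contDiff_iff_contDiffAt]
    intro p
    by_cases hp : p ∈ D
    · exact (hV n).contDiffAt.congr_of_eventuallyEq (hin n p hp)
    · exact contDiffAt_const.congr_of_eventuallyEq (hout n p hp)
  · exact HasCompactSupport.intro hDb.isCompact_closure fun p hp =>
      Set.indicator_of_notMem (fun h => hp (subset_closure h)) _
  · by_cases hp : p ∈ D
    · simp only [Set.indicator_of_mem hp, V]
      rw [abs_mul, abs_of_pos (inv_pos.2 (hN n)), inv_mul_le_iff₀ (hN n)]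
      simpa [abs_mul, abs_of_pos (hN n)] using hθle (N n * u p)
    · simp [Set.indicator_of_notMem hp]
  · rw [hfd]
    by_cases hp : p ∈ D
    · simp only [Set.indicator_of_mem hp, norm_smul, Real.norm_eq_abs]
      gcongr
      exact hK _
    · simp [Set.indicator_of_notMem hp]
  · by_cases hp : p ∈ D
    · simp only [Set.indicator_of_mem hp, V]
      by_cases h0 : u p = 0
      · simp [h0, hθ0 0]
      · refine tendsto_const_nhds.congr' ?_
        have ht : Tendsto (fun n : ℕ => N n * |u p|) atTop atTop :=
          (tendsto_natCast_atTop_atTop.atTop_add tendsto_const_nhds).atTop_mul_const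
            (abs_pos.2 h0)
        filter_upwards [ht.eventually_ge_atTop 2] with n hn
        rw [hθ1 _ (by rwa [abs_mul, abs_of_pos (hN n)]), inv_mul_cancel_left₀ (hN n).ne']
    · simp [Set.indicator_of_notMem hp]
  · filter_upwards [ae_fderiv_eq_zero_of_eq_zero hu] with p hp0
    simp only [hfd]
    by_cases hp : p ∈ D
    · simp only [Set.indicator_of_mem hp]
      by_cases h0 : u p = 0
      · simp [hp0 h0]
      · refine tendsto_const_nhds.congr' ?_
        have ht : Tendsto (fun n : ℕ => N n * |u p|) atTop atTop :=
          (tendsto_natCast_atTop_atTop.atTop_add tendsto_const_nhds).atTop_mul_const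
            (abs_pos.2 h0)
        filter_upwards [ht.eventually_gt_atTop 2] with n hn
        have hev : θ =ᶠ[𝓝 (N n * u p)] fun x => x := by
          have : ∀ᶠ x in 𝓝 (N n * u p), 2 < |x| :=
            continuousAt_const.eventually_lt continuous_abs.continuousAt
              (by rwa [abs_mul, abs_of_pos (hN n)])
          filter_upwards [this] with x hx using hθ1 x hx.le
        rw [hev.deriv_eq]
        simp
    · simp [Set.indicator_of_notMem hp]

theorem integrableOn_of_continuous {D : Set (ℝ × ℝ)} (hDb : Bornology.IsBounded D)
    {g : ℝ × ℝ → ℝ} (hg : Continuous g) : IntegrableOn g D :=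
  (hg.continuousOn.integrableOn_compact hDb.isCompact_closure).mono_set subset_closure

theorem setIntegral_fderiv_eq_zero {D : Set (ℝ × ℝ)} (hD : IsOpen D)
    (hDb : Bornology.IsBounded D) {u : ℝ × ℝ → ℝ} (hu : ContDiff ℝ (⊤ : ℕ∞) u)
    (hu0 : ∀ p ∈ frontier D, u p = 0) (v : ℝ × ℝ) : ∫ p in D, fderiv ℝ u p v = 0 := by
  obtain ⟨U, K, hK, hU, hUs, -, hUb, -, hUt⟩ := exists_compactly_supported_approx hD hDb hu hu0
  have hz : ∀ n, ∫ p, fderiv ℝ (U n) p v = 0 := by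
    intro n
    have hc : Continuous fun p => fderiv ℝ (U n) p v :=
      ((hU n).continuous_fderiv (by simp)).clm_apply continuous_const
    have h := integral_mul_fderiv_eq_neg_fderiv_mul_of_integrable (μ := volume)
      (f := fun _ : ℝ × ℝ => (1 : ℝ)) (g := U n) (v := v) (by simp)
      (by simpa using hc.integrable_of_hasCompactSupport ((hUs n).fderiv_apply ℝ v))
      (by simpa using (hU n).continuous.integrable_of_hasCompactSupport (hUs n))
      (by fun_prop) (fun x _ => (hU n).differentiable (by simp) x)
    simpa using h
  have hlim : Tendsto (fun n => ∫ p, fderiv ℝ (U n) p v) atTop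
      (𝓝 (∫ p, D.indicator (fun p => fderiv ℝ u p v) p)) := by
    refine tendsto_integral_of_dominated_convergence
      (D.indicator (fun p => K * ‖fderiv ℝ u p‖ * ‖v‖)) (fun n => ?_) ?_ (fun n => ?_) ?_
    · exact (((hU n).continuous_fderiv (by simp)).clm_apply
        continuous_const).aestronglyMeasurable
    · refine (integrableOn_of_continuous hDb ?_).integrable_indicator hD.measurableSet
      have := hu.continuous_fderiv (by simp)
      fun_prop
    · refine Eventually.of_forall fun p => ?_
      refine (ContinuousLinearMap.le_opNorm _ _).trans ?_
      refine (mul_le_mul_of_nonneg_right (hUb n p) (norm_nonneg v)).trans_eq ?_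
      by_cases hp : p ∈ D <;> simp [hp]
    · filter_upwards [hUt] with p hp
      have : D.indicator (fun p => fderiv ℝ u p v) p = D.indicator (fderiv ℝ u) p v := by
        by_cases hp : p ∈ D <;> simp [hp]
      rw [this]
      exact ((ContinuousLinearMap.apply ℝ ℝ v).continuous.tendsto _).comp hp
  rw [integral_indicator hD.measurableSet] at hlim
  simp only [hz] at hlim
  exact tendsto_nhds_unique hlim tendsto_const_nhds

/-- **Wente's inequality** on a bounded open set, without any regularity of the boundary. -/
theorem wente {D : Set (ℝ × ℝ)} (hD : IsOpen D) (hDb : Bornology.IsBounded D)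
    {a b c : ℝ × ℝ → ℝ} (ha : ContDiff ℝ (⊤ : ℕ∞) a) (ha0 : ∀ p ∈ frontier D, a p = 0)
    (hb : ContDiff ℝ (⊤ : ℕ∞) b) (hb0 : ∀ p ∈ frontier D, b p = 0)
    (hc : ContDiff ℝ (⊤ : ℕ∞) c) (hc0 : ∀ p ∈ frontier D, c p = 0) :
    (∫ p in D, jac a b p * c p) ^ 2 ≤ gradsq D a * gradsq D b * gradsq D c := by
  obtain ⟨A, K, hK, hA, hAs, -, hAb, -, hAt⟩ := exists_compactly_supported_approx hD hDb ha ha0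
  obtain ⟨B, L, hL, hB, hBs, -, hBb, -, hBt⟩ := exists_compactly_supported_approx hD hDb hb hb0
  obtain ⟨C, M, hM, hC, hCs, hCb0, hCb, hCt0, hCt⟩ :=
    exists_compactly_supported_approx hD hDb hc hc0
  have cont : ∀ {u : ℝ × ℝ → ℝ}, ContDiff ℝ (⊤ : ℕ∞) u → ∀ v, Continuous fun p => fderiv ℝ u p v :=
    fun hu v => (hu.continuous_fderiv (by simp)).clm_apply continuous_const
  have bound : ∀ {K : ℝ} {u U : ℝ × ℝ → ℝ} {p v : ℝ × ℝ}, ‖v‖ ≤ 1 →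
      ‖fderiv ℝ U p‖ ≤ D.indicator (fun p => K * ‖fderiv ℝ u p‖) p →
      |fderiv ℝ U p v| ≤ D.indicator (fun p => K * ‖fderiv ℝ u p‖) p := fun hv h =>
    (ContinuousLinearMap.le_of_opNorm_le_of_le _ h hv).trans_eq (mul_one _)
  have hx : ‖((1 : ℝ), (0 : ℝ))‖ ≤ 1 := by simp
  have hy : ‖((0 : ℝ), (1 : ℝ))‖ ≤ 1 := by simp
  have lim : ∀ {u : ℝ × ℝ → ℝ} {U : ℕ → ℝ × ℝ → ℝ} {p : ℝ × ℝ} (v : ℝ × ℝ),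
      Tendsto (fun n => fderiv ℝ (U n) p) atTop (𝓝 (D.indicator (fderiv ℝ u) p)) →
      Tendsto (fun n => fderiv ℝ (U n) p v) atTop (𝓝 (D.indicator (fderiv ℝ u) p v)) :=
    fun v h => ((ContinuousLinearMap.apply ℝ ℝ v).continuous.tendsto _).comp h
  have hgrad : ∀ {u : ℝ × ℝ → ℝ} {U : ℕ → ℝ × ℝ → ℝ} {K : ℝ}, ContDiff ℝ (⊤ : ℕ∞) u →
      (∀ n, ContDiff ℝ (⊤ : ℕ∞) (U n)) →
      (∀ n p, ‖fderiv ℝ (U n) p‖ ≤ D.indicator (fun p => K * ‖fderiv ℝ u p‖) p) →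
      (∀ᵐ p, Tendsto (fun n => fderiv ℝ (U n) p) atTop (𝓝 (D.indicator (fderiv ℝ u) p))) →
      Tendsto (fun n => ∫ p, (pdx (U n) p ^ 2 + pdy (U n) p ^ 2)) atTop (𝓝 (gradsq D u)) := by
    intro u U K hu hU hb ht
    rw [gradsq, ← integral_indicator hD.measurableSet]
    refine tendsto_integral_of_dominated_convergence
      (D.indicator (fun p => 2 * (K * ‖fderiv ℝ u p‖) ^ 2)) (fun n => ?_) ?_ (fun n => ?_) ?_
    · exact (((cont (hU n) _).pow 2).add ((cont (hU n) _).pow 2)).aestronglyMeasurable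
    · refine (integrableOn_of_continuous hDb ?_).integrable_indicator hD.measurableSet
      have := hu.continuous_fderiv (by simp)
      fun_prop
    · refine Eventually.of_forall fun p => ?_
      have h1 := bound hx (hb n p)
      have h2 := bound hy (hb n p)
      simp only [pdx, pdy]
      rw [Real.norm_of_nonneg (by positivity)]
      have e : D.indicator (fun p => 2 * (K * ‖fderiv ℝ u p‖) ^ 2) p
          = 2 * (D.indicator (fun p => K * ‖fderiv ℝ u p‖) p) ^ 2 := by
        by_cases hp : p ∈ D <;> simp [hp]
      rw [e]
      have h3 := pow_le_pow_left₀ (abs_nonneg _) h1 2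
      have h4 := pow_le_pow_left₀ (abs_nonneg _) h2 2
      rw [sq_abs] at h3 h4
      linarith
    · filter_upwards [ht] with p hp
      have e : D.indicator (fun p => pdx u p ^ 2 + pdy u p ^ 2) p
          = (D.indicator (fderiv ℝ u) p (1, 0)) ^ 2 + (D.indicator (fderiv ℝ u) p (0, 1)) ^ 2 := by
        by_cases hp : p ∈ D <;> simp [hp, pdx, pdy]
      rw [e]
      exact ((lim _ hp).pow 2).add ((lim _ hp).pow 2)
  have hjac : Tendsto (fun n => ∫ p, jac (A n) (B n) p * C n p) atTop
      (𝓝 (∫ p in D, jac a b p * c p)) := by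
    rw [← integral_indicator hD.measurableSet]
    refine tendsto_integral_of_dominated_convergence
      (D.indicator (fun p => 2 * ((K * ‖fderiv ℝ a p‖) * (L * ‖fderiv ℝ b p‖)) * |c p|))
      (fun n => ?_) ?_ (fun n => ?_) ?_
    · exact ((((cont (hA n) _).mul (cont (hB n) _)).sub
        ((cont (hA n) _).mul (cont (hB n) _))).mul (hC n).continuous).aestronglyMeasurable
    · refine (integrableOn_of_continuous hDb ?_).integrable_indicator hD.measurableSet
      have := ha.continuous_fderiv (by simp)
      have := hb.continuous_fderiv (by simp)
      have := hc.continuous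
      fun_prop
    · refine Eventually.of_forall fun p => ?_
      have e : D.indicator (fun p => 2 * ((K * ‖fderiv ℝ a p‖) * (L * ‖fderiv ℝ b p‖)) * |c p|) p
          = 2 * (D.indicator (fun p => K * ‖fderiv ℝ a p‖) p *
            D.indicator (fun p => L * ‖fderiv ℝ b p‖) p) * D.indicator (fun p => |c p|) p := by
        by_cases hp : p ∈ D <;> simp [hp]
      rw [e, norm_mul, Real.norm_eq_abs, Real.norm_eq_abs]
      have h0 : 0 ≤ D.indicator (fun p => K * ‖fderiv ℝ a p‖) p :=
        (norm_nonneg _).trans (hAb n p)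
      refine mul_le_mul ?_ (hCb0 n p) (abs_nonneg _) ?_
      · refine (abs_sub _ _).trans ?_
        rw [two_mul, abs_mul, abs_mul]
        exact add_le_add
          (mul_le_mul (bound hx (hAb n p)) (bound hy (hBb n p)) (abs_nonneg _) h0)
          (mul_le_mul (bound hy (hAb n p)) (bound hx (hBb n p)) (abs_nonneg _) h0)
      · have := (norm_nonneg _).trans (hBb n p)
        positivity
    · filter_upwards [hAt, hBt] with p hp hq
      have e : D.indicator (fun p => jac a b p * c p) p
          = ((D.indicator (fderiv ℝ a) p (1, 0)) * (D.indicator (fderiv ℝ b) p (0, 1))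
            - (D.indicator (fderiv ℝ a) p (0, 1)) * (D.indicator (fderiv ℝ b) p (1, 0)))
              * D.indicator c p := by
        by_cases hp : p ∈ D <;> simp [hp, jac, pdx, pdy]
      rw [e]
      exact (((lim _ hp).mul (lim _ hq)).sub ((lim _ hp).mul (lim _ hq))).mul (hCt0 p)
  exact le_of_tendsto_of_tendsto' (hjac.pow 2)
    (((hgrad ha hA hAb hAt).mul (hgrad hb hB hBb hBt)).mul (hgrad hc hC hCb hCt)) fun n =>
    wente_of_hasCompactSupport (hA n) (hAs n) (hB n) (hBs n) (hC n) (hCs n)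

theorem ContDiff.pdx {u : ℝ × ℝ → ℝ} (hu : ContDiff ℝ (⊤ : ℕ∞) u) :
    ContDiff ℝ (⊤ : ℕ∞) (_root_.pdx u) :=
  (hu.fderiv_right (by simp)).clm_apply contDiff_const

theorem ContDiff.pdy {u : ℝ × ℝ → ℝ} (hu : ContDiff ℝ (⊤ : ℕ∞) u) :
    ContDiff ℝ (⊤ : ℕ∞) (_root_.pdy u) :=
  (hu.fderiv_right (by simp)).clm_apply contDiff_const

theorem ContDiff.lap {u : ℝ × ℝ → ℝ} (hu : ContDiff ℝ (⊤ : ℕ∞) u) :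
    ContDiff ℝ (⊤ : ℕ∞) (_root_.lap u) :=
  hu.pdx.pdx.add hu.pdy.pdy

theorem ContDiff.jac {u v : ℝ × ℝ → ℝ} (hu : ContDiff ℝ (⊤ : ℕ∞) u)
    (hv : ContDiff ℝ (⊤ : ℕ∞) v) : ContDiff ℝ (⊤ : ℕ∞) (_root_.jac u v) :=
  (hu.pdx.mul hv.pdy).sub (hu.pdy.mul hv.pdx)

namespace SmoothField

variable {u v : ℝ → ℝ × ℝ → ℝ}

theorem slice (hu : SmoothField u) (t : ℝ) : ContDiff ℝ (⊤ : ℕ∞) (u t) :=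
  ContDiff.comp (g := Function.uncurry u) (f := fun p : ℝ × ℝ => (t, p)) hu
    (contDiff_const.prodMk contDiff_id)

theorem add (hu : SmoothField u) (hv : SmoothField v) : SmoothField fun t p => u t p + v t p :=
  ContDiff.add hu hv

theorem sub (hu : SmoothField u) (hv : SmoothField v) : SmoothField fun t p => u t p - v t p :=
  ContDiff.sub hu hv

theorem mul (hu : SmoothField u) (hv : SmoothField v) : SmoothField fun t p => u t p * v t p :=
  ContDiff.mul hu hv

theorem const_mul (c : ℝ) (hu : SmoothField u) : SmoothField fun t p => c * u t p :=
  ContDiff.mul contDiff_const hu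

theorem pow (hu : SmoothField u) (n : ℕ) : SmoothField fun t p => u t p ^ n :=
  ContDiff.pow hu n

theorem fderiv_slice (hu : SmoothField u) (t : ℝ) (p w : ℝ × ℝ) :
    fderiv ℝ (u t) p w = fderiv ℝ (Function.uncurry u) (t, p) (0, w) := by
  have h1 : HasFDerivAt (fun p : ℝ × ℝ => (t, p)) (ContinuousLinearMap.inr ℝ ℝ (ℝ × ℝ)) p :=
    hasFDerivAt_prodMk_right t p
  have h2 := (ContDiff.differentiable hu (by simp) (t, p)).hasFDerivAt.comp p h1
  rw [show u t = Function.uncurry u ∘ fun p => (t, p) from rfl, h2.fderiv]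
  simp

theorem hasDerivAt_time (hu : SmoothField u) (t : ℝ) (p : ℝ × ℝ) :
    HasDerivAt (fun s => u s p) (fderiv ℝ (Function.uncurry u) (t, p) (1, 0)) t := by
  have h1 : HasFDerivAt (fun s : ℝ => (s, p)) (ContinuousLinearMap.inl ℝ ℝ (ℝ × ℝ)) t :=
    hasFDerivAt_prodMk_left t p
  have h2 := (ContDiff.differentiable hu (by simp) (t, p)).hasFDerivAt.comp t h1
  exact HasDerivAt.congr_deriv (f := Function.uncurry u ∘ fun s => (s, p)) h2.hasDerivAt (by simp)

theorem apply_fderiv (hu : SmoothField u) (w : ℝ × ℝ × ℝ) :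
    SmoothField fun t p => fderiv ℝ (Function.uncurry u) (t, p) w :=
  (ContDiff.fderiv_right (m := (⊤ : ℕ∞)) hu (by simp)).clm_apply contDiff_const

theorem pdx (hu : SmoothField u) : SmoothField fun t => _root_.pdx (u t) := by
  convert hu.apply_fderiv (0, (1, 0)) using 3
  exact hu.fderiv_slice _ _ _

theorem pdy (hu : SmoothField u) : SmoothField fun t => _root_.pdy (u t) := by
  convert hu.apply_fderiv (0, (0, 1)) using 3
  exact hu.fderiv_slice _ _ _

theorem deriv_time (hu : SmoothField u) : SmoothField fun t p => deriv (fun s => u s p) t := by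
  convert hu.apply_fderiv (1, 0) using 3
  exact (hu.hasDerivAt_time _ _).deriv

theorem lap (hu : SmoothField u) : SmoothField fun t => _root_.lap (u t) :=
  hu.pdx.pdx.add hu.pdy.pdy

theorem jac (hu : SmoothField u) (hv : SmoothField v) :
    SmoothField fun t => _root_.jac (u t) (v t) :=
  (hu.pdx.mul hv.pdy).sub (hu.pdy.mul hv.pdx)

theorem hasDerivAt_setIntegral {D : Set (ℝ × ℝ)} (hDb : Bornology.IsBounded D)
    (hD : IsOpen D) (hu : SmoothField u) (t : ℝ) :
    HasDerivAt (fun t => ∫ p in D, u t p) (∫ p in D, deriv (fun s => u s p) t) t := by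
  have hK : IsCompact (Metric.closedBall t 1 ×ˢ closure D) :=
    (isCompact_closedBall t 1).prod hDb.isCompact_closure
  obtain ⟨B, hB⟩ := hK.exists_bound_of_continuousOn
    (ContDiff.continuous hu.deriv_time).continuousOn
  have hfin : IsFiniteMeasure (volume.restrict D) := ⟨by
    simpa using hDb.measure_lt_top⟩
  refine (hasDerivAt_integral_of_dominated_loc_of_deriv_le (bound := fun _ => B)
    (F' := fun t p => deriv (fun s => u s p) t)
    (Metric.closedBall_mem_nhds t one_pos) ?_ ?_ ?_ ?_ ?_ ?_).2
  · exact Eventually.of_forall fun s => (hu.slice s).continuous.aestronglyMeasurable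
  · exact integrableOn_of_continuous hDb (hu.slice t).continuous
  · exact (hu.deriv_time.slice t).continuous.aestronglyMeasurable
  · filter_upwards [ae_restrict_mem hD.measurableSet] with p hp s hs
    exact hB (s, p) ⟨hs, subset_closure hp⟩
  · exact integrable_const _
  · exact Eventually.of_forall fun p s _ =>
      (hu.hasDerivAt_time s p).differentiableAt.hasDerivAt

theorem continuous_setIntegral {D : Set (ℝ × ℝ)} (hDb : Bornology.IsBounded D)
    (hD : IsOpen D) (hu : SmoothField u) : Continuous fun t => ∫ p in D, u t p :=
  continuous_iff_continuousAt.2 fun t => (hu.hasDerivAt_setIntegral hDb hD t).continuousAt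

theorem continuous_l2sq {D : Set (ℝ × ℝ)} (hDb : Bornology.IsBounded D)
    (hD : IsOpen D) (hu : SmoothField u) : Continuous fun t => l2sq D (u t) :=
  (hu.pow 2).continuous_setIntegral hDb hD

theorem continuous_gradsq {D : Set (ℝ × ℝ)} (hDb : Bornology.IsBounded D)
    (hD : IsOpen D) (hu : SmoothField u) : Continuous fun t => gradsq D (u t) :=
  ((hu.pdx.pow 2).add (hu.pdy.pow 2)).continuous_setIntegral hDb hD

theorem hasDerivAt_l2sq {D : Set (ℝ × ℝ)} (hDb : Bornology.IsBounded D)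
    (hD : IsOpen D) (hu : SmoothField u) (t : ℝ) :
    HasDerivAt (fun t => l2sq D (u t)) (2 * ∫ p in D, u t p * deriv (fun s => u s p) t) t := by
  refine ((hu.pow 2).hasDerivAt_setIntegral hDb hD t).congr_deriv ?_
  rw [← integral_const_mul]
  congr 1 with p
  rw [((hu.hasDerivAt_time t p).differentiableAt.hasDerivAt.fun_pow 2).deriv]
  push_cast
  ring

end SmoothField

/-- A Grönwall inequality with integrable rate that also controls the dissipation `g`. -/
theorem gronwall_dissipation {E E' k h g : ℝ → ℝ} {T : ℝ}
    (hE : ∀ t, HasDerivAt E (E' t) t) (hk : Continuous k) (hh : Continuous h) (hg : Continuous g)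
    (hk0 : ∀ t, 0 ≤ k t) (hh0 : ∀ t, 0 ≤ h t) (hg0 : ∀ t, 0 ≤ g t)
    (hle : ∀ t ∈ Set.Icc 0 T, E' t ≤ k t * E t + h t - g t) {t : ℝ} (ht : t ∈ Set.Icc 0 T) :
    exp (-∫ s in (0:ℝ)..t, k s) * E t + exp (-∫ s in (0:ℝ)..T, k s) * ∫ s in (0:ℝ)..t, g s
      ≤ E 0 + ∫ s in (0:ℝ)..t, h s := by
  let y : ℝ → ℝ := fun t => exp (-∫ s in (0:ℝ)..t, k s) * E t - (∫ s in (0:ℝ)..t, h s)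
    + exp (-∫ s in (0:ℝ)..T, k s) * ∫ s in (0:ℝ)..t, g s
  have hy : ∀ t, HasDerivAt y ((exp (-∫ s in (0:ℝ)..t, k s) * (-k t) * E t
      + exp (-∫ s in (0:ℝ)..t, k s) * E' t) - h t + exp (-∫ s in (0:ℝ)..T, k s) * g t) t := by
    intro t
    exact (((hk.integral_hasStrictDerivAt 0 t).hasDerivAt.neg.exp.mul (hE t)).sub
      (hh.integral_hasStrictDerivAt 0 t).hasDerivAt).add
      ((hg.integral_hasStrictDerivAt 0 t).hasDerivAt.const_mul _)
  have hanti : AntitoneOn y (Set.Icc 0 T) := by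
    refine antitoneOn_of_deriv_nonpos (convex_Icc 0 T)
      (fun t _ => (hy t).continuousAt.continuousWithinAt)
      (fun t _ => (hy t).differentiableAt.differentiableWithinAt) fun t ht => ?_
    rw [interior_Icc] at ht
    rw [(hy t).deriv]
    have h1 := hle t ⟨ht.1.le, ht.2.le⟩
    have h2 : exp (-∫ s in (0:ℝ)..t, k s) ≤ 1 := exp_le_one_iff.2 <| neg_nonpos.2 <|
      intervalIntegral.integral_nonneg ht.1.le fun s _ => hk0 s
    have h3 : exp (-∫ s in (0:ℝ)..T, k s) ≤ exp (-∫ s in (0:ℝ)..t, k s) := by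
      refine exp_le_exp.2 (neg_le_neg ?_)
      exact intervalIntegral.integral_mono_interval le_rfl ht.1.le ht.2.le
        (Eventually.of_forall hk0) (hk.intervalIntegrable _ _)
    have h4 := mul_le_mul_of_nonneg_left h1 (exp_pos (-∫ s in (0:ℝ)..t, k s)).le
    nlinarith [mul_le_mul_of_nonneg_right h2 (hh0 t), mul_le_mul_of_nonneg_right h3 (hg0 t)]
  have := hanti (Set.left_mem_Icc.2 (ht.1.trans ht.2)) ht ht.1
  simp only [y, intervalIntegral.integral_same, neg_zero, exp_zero] at this
  linarith

theorem gradsq_nonneg (D : Set (ℝ × ℝ)) (u : ℝ × ℝ → ℝ) : 0 ≤ gradsq D u :=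
  integral_nonneg fun _ => by positivity

theorem l2sq_nonneg (D : Set (ℝ × ℝ)) (u : ℝ × ℝ → ℝ) : 0 ≤ l2sq D u :=
  integral_nonneg fun _ => by positivity

section Pointwise

variable {u v : ℝ × ℝ → ℝ}

theorem pdx_mul (hu : ContDiff ℝ (⊤ : ℕ∞) u) (hv : ContDiff ℝ (⊤ : ℕ∞) v) (p : ℝ × ℝ) :
    pdx (fun p => u p * v p) p = u p * pdx v p + v p * pdx u p := by
  simp [pdx, fderiv_fun_mul (hu.differentiable (by simp) p) (hv.differentiable (by simp) p)]

theorem pdy_mul (hu : ContDiff ℝ (⊤ : ℕ∞) u) (hv : ContDiff ℝ (⊤ : ℕ∞) v) (p : ℝ × ℝ) :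
    pdy (fun p => u p * v p) p = u p * pdy v p + v p * pdy u p := by
  simp [pdy, fderiv_fun_mul (hu.differentiable (by simp) p) (hv.differentiable (by simp) p)]

theorem pdx_sub (hu : ContDiff ℝ (⊤ : ℕ∞) u) (hv : ContDiff ℝ (⊤ : ℕ∞) v) :
    pdx (fun p => u p - v p) = fun p => pdx u p - pdx v p := by
  ext p
  simp [pdx, fderiv_fun_sub (hu.differentiable (by simp) p) (hv.differentiable (by simp) p)]

theorem pdy_sub (hu : ContDiff ℝ (⊤ : ℕ∞) u) (hv : ContDiff ℝ (⊤ : ℕ∞) v) :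
    pdy (fun p => u p - v p) = fun p => pdy u p - pdy v p := by
  ext p
  simp [pdy, fderiv_fun_sub (hu.differentiable (by simp) p) (hv.differentiable (by simp) p)]

theorem lap_sub (hu : ContDiff ℝ (⊤ : ℕ∞) u) (hv : ContDiff ℝ (⊤ : ℕ∞) v) (p : ℝ × ℝ) :
    lap (fun p => u p - v p) p = lap u p - lap v p := by
  simp only [lap, pdx_sub hu hv, pdy_sub hu hv, pdx_sub hu.pdx hv.pdx, pdy_sub hu.pdy hv.pdy]
  ring

theorem pdy_pdx (hu : ContDiff ℝ (⊤ : ℕ∞) u) (p : ℝ × ℝ) : pdy (pdx u) p = pdx (pdy u) p := by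
  have hd : DifferentiableAt ℝ (fderiv ℝ u) p :=
    (hu.fderiv_right (m := (⊤ : ℕ∞)) (by simp)).differentiable (by simp) p
  have h : ∀ v w : ℝ × ℝ, fderiv ℝ (fun q => fderiv ℝ u q v) p w = fderiv ℝ (fderiv ℝ u) p w v := by
    intro v w
    rw [fderiv_clm_apply hd (differentiableAt_const v)]
    simp
  have hs : IsSymmSndFDerivAt ℝ u p :=
    hu.contDiffAt.isSymmSndFDerivAt (by
    simp only [minSmoothness_of_isRCLikeNormedField]
    exact WithTop.coe_le_coe.2 (le_top (a := (2 : ℕ∞))))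
  change fderiv ℝ (fun q => fderiv ℝ u q (1, 0)) p (0, 1)
    = fderiv ℝ (fun q => fderiv ℝ u q (0, 1)) p (1, 0)
  rw [h, h]
  exact hs _ _

end Pointwise

section Integral

variable {D : Set (ℝ × ℝ)}

theorem integral_mul_lap (hD : IsOpen D) (hDb : Bornology.IsBounded D) {u : ℝ × ℝ → ℝ}
    (hu : ContDiff ℝ (⊤ : ℕ∞) u) (hu0 : ∀ p ∈ frontier D, u p = 0) :
    ∫ p in D, u p * lap u p = -gradsq D u := by
  have hx := setIntegral_fderiv_eq_zero hD hDb (hu.mul hu.pdx)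
    (fun p hp => by simp [hu0 p hp]) (1, 0)
  have hy := setIntegral_fderiv_eq_zero hD hDb (hu.mul hu.pdy)
    (fun p hp => by simp [hu0 p hp]) (0, 1)
  change ∫ p in D, pdx (fun p => u p * pdx u p) p = 0 at hx
  change ∫ p in D, pdy (fun p => u p * pdy u p) p = 0 at hy
  simp only [pdx_mul hu hu.pdx] at hx
  simp only [pdy_mul hu hu.pdy] at hy
  have hu' := hu.continuous
  have hux := hu.pdx.continuous
  have huy := hu.pdy.continuous
  have huxx := hu.pdx.pdx.continuous
  have huyy := hu.pdy.pdy.continuous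
  have hul := hu.lap.continuous
  rw [eq_neg_iff_add_eq_zero, gradsq, ← integral_add
    (integrableOn_of_continuous hDb (by fun_prop))
    (integrableOn_of_continuous hDb (by fun_prop)), ← add_zero 0]
  nth_rw 1 [← hx]
  rw [← hy, ← integral_add (integrableOn_of_continuous hDb (by fun_prop))
    (integrableOn_of_continuous hDb (by fun_prop))]
  congr 1 with p
  simp only [lap]
  ring

theorem integral_jac_mul_self (hD : IsOpen D) (hDb : Bornology.IsBounded D)
    {ψ u : ℝ × ℝ → ℝ} (hψ : ContDiff ℝ (⊤ : ℕ∞) ψ) (hu : ContDiff ℝ (⊤ : ℕ∞) u)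
    (hu0 : ∀ p ∈ frontier D, u p = 0) :
    ∫ p in D, jac ψ u p * u p = 0 := by
  have hx := setIntegral_fderiv_eq_zero hD hDb (hψ.pdy.mul (hu.mul hu))
    (fun p hp => by simp [hu0 p hp]) (1, 0)
  have hy := setIntegral_fderiv_eq_zero hD hDb (hψ.pdx.mul (hu.mul hu))
    (fun p hp => by simp [hu0 p hp]) (0, 1)
  change ∫ p in D, pdx (fun p => pdy ψ p * (u p * u p)) p = 0 at hx
  change ∫ p in D, pdy (fun p => pdx ψ p * (u p * u p)) p = 0 at hy
  have h : ∀ p, jac ψ u p * u p = 2⁻¹ * (pdy (fun p => pdx ψ p * (u p * u p)) p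
      - pdx (fun p => pdy ψ p * (u p * u p)) p) := by
    intro p
    rw [pdx_mul hψ.pdy (hu.mul hu), pdy_mul hψ.pdx (hu.mul hu), pdx_mul hu hu, pdy_mul hu hu,
      pdy_pdx hψ, jac]
    ring
  simp_rw [h]
  rw [integral_const_mul, integral_sub
    (integrableOn_of_continuous hDb (hψ.pdx.mul (hu.mul hu)).pdy.continuous)
    (integrableOn_of_continuous hDb (hψ.pdy.mul (hu.mul hu)).pdx.continuous), hx, hy]
  simp

/-- Poincaré's inequality on a domain contained in the strip `|x| ≤ L`. -/
theorem l2sq_le_gradsq (hD : IsOpen D) (hDb : Bornology.IsBounded D) {L : ℝ}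
    (hL : ∀ p ∈ D, |p.1| ≤ L) {u : ℝ × ℝ → ℝ}
    (hu : ContDiff ℝ (⊤ : ℕ∞) u) (hu0 : ∀ p ∈ frontier D, u p = 0) :
    l2sq D u ≤ 4 * L ^ 2 * gradsq D u := by
  have h := setIntegral_fderiv_eq_zero hD hDb (contDiff_fst.mul (hu.mul hu))
    (fun p hp => by simp [hu0 p hp]) (1, 0)
  change ∫ p in D, pdx (fun p => p.1 * (u p * u p)) p = 0 at h
  have hfst : ∀ p : ℝ × ℝ, pdx (fun p => p.1) p = 1 := fun p => by
    change fderiv ℝ Prod.fst p (1, 0) = 1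
    simp [fderiv_fst]
  have hu' := hu.continuous
  have hux := hu.pdx.continuous
  have huy := hu.pdy.continuous
  simp only [pdx_mul contDiff_fst (hu.mul hu), pdx_mul hu hu, hfst] at h
  have hle : 2⁻¹ * l2sq D u - 2 * L ^ 2 * gradsq D u ≤ 0 := by
    rw [← h, l2sq, gradsq, ← integral_const_mul, ← integral_const_mul,
      ← integral_sub (integrableOn_of_continuous hDb (by fun_prop))
        (integrableOn_of_continuous hDb (by fun_prop))]
    refine setIntegral_mono_on (integrableOn_of_continuous hDb (by fun_prop))
      (integrableOn_of_continuous hDb (by fun_prop)) hD.measurableSet fun p hp => ?_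
    have h1 : p.1 ^ 2 ≤ L ^ 2 := sq_le_sq' (abs_le.1 (hL p hp)).1 (abs_le.1 (hL p hp)).2
    have h2 := mul_le_mul_of_nonneg_right h1 (sq_nonneg (pdx u p))
    nlinarith [sq_nonneg (u p + 2 * p.1 * pdx u p), mul_nonneg (sq_nonneg L) (sq_nonneg (pdy u p))]
  linarith

theorem gradsq_le_l2sq_lap (hD : IsOpen D) (hDb : Bornology.IsBounded D) {L : ℝ} (hL0 : 0 < L)
    (hL : ∀ p ∈ D, |p.1| ≤ L) {u v : ℝ × ℝ → ℝ} (hu : ContDiff ℝ (⊤ : ℕ∞) u)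
    (hv : Continuous v) (hu0 : ∀ p ∈ frontier D, u p = 0) (huv : ∀ p ∈ D, v p = lap u p) :
    gradsq D u ≤ 4 * L ^ 2 * l2sq D v := by
  have h1 : ∫ p in D, u p * v p = -gradsq D u := by
    rw [← integral_mul_lap hD hDb hu hu0]
    exact setIntegral_congr_fun hD.measurableSet fun p hp => by simp only [huv p hp]
  have h2 := l2sq_le_gradsq hD hDb hL hu hu0
  have hu' := hu.continuous
  have h3 : 0 ≤ (8 * L ^ 2)⁻¹ * l2sq D u + 2 * L ^ 2 * l2sq D v + ∫ p in D, u p * v p := by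
    rw [l2sq, l2sq, ← integral_const_mul, ← integral_const_mul,
      ← integral_add (integrableOn_of_continuous hDb (by fun_prop))
        (integrableOn_of_continuous hDb (by fun_prop)),
      ← integral_add (integrableOn_of_continuous hDb (by fun_prop))
        (integrableOn_of_continuous hDb (by fun_prop))]
    refine integral_nonneg fun p => ?_
    have : (8 * L ^ 2)⁻¹ * u p ^ 2 + 2 * L ^ 2 * v p ^ 2 + u p * v p
        = (8 * L ^ 2)⁻¹ * (u p + 4 * L ^ 2 * v p) ^ 2 := by field_simp; ring
    simp only [Pi.zero_apply, this]
    positivity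
  have h4 : (8 * L ^ 2)⁻¹ * l2sq D u ≤ 2⁻¹ * gradsq D u := by
    calc _ ≤ (8 * L ^ 2)⁻¹ * (4 * L ^ 2 * gradsq D u) := by gcongr
      _ = _ := by field_simp; ring
  linarith

/-- The energy inequality, at a fixed time, for a solution of the vorticity equation with
an additional nonlinear term `N`. -/
theorem energy_le (hD : IsOpen D) (hDb : Bornology.IsBounded D) {L β ν r : ℝ} (hL0 : 0 < L)
    (hL : ∀ p ∈ D, |p.1| ≤ L) (hr : 0 ≤ r) {v v' χ ψ N g : ℝ × ℝ → ℝ}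
    (hv : ContDiff ℝ (⊤ : ℕ∞) v)
    (hχ : ContDiff ℝ (⊤ : ℕ∞) χ) (hψ : ContDiff ℝ (⊤ : ℕ∞) ψ) (hN : Continuous N)
    (hg : Continuous g) (hv0 : ∀ p ∈ frontier D, v p = 0) (hχ0 : ∀ p ∈ frontier D, χ p = 0)
    (hχv : ∀ p ∈ D, v p = lap χ p)
    (heq : ∀ p ∈ D, v' p + jac ψ v p + N p + β * pdx χ p = ν * lap v p - r * v p + g p) :
    2 * ∫ p in D, v p * v' p ≤ (|β| * (4 * L ^ 2 + 1) + 1) * l2sq D v + l2sq D g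
      - 2 * ν * gradsq D v - 2 * ∫ p in D, N p * v p := by
  have hv_ := hv.continuous
  have hχx := hχ.pdx.continuous
  have hχy := hχ.pdy.continuous
  have hl := hv.lap.continuous
  have hj := (hψ.jac hv).continuous
  have i1 : ∀ {f : ℝ × ℝ → ℝ}, Continuous f → IntegrableOn f D := integrableOn_of_continuous hDb
  have h1 : ∫ p in D, v p * v' p = ν * (∫ p in D, v p * lap v p) - r * l2sq D v
      + (∫ p in D, v p * (g p - β * pdx χ p)) - (∫ p in D, jac ψ v p * v p)
      - ∫ p in D, N p * v p := by
    rw [l2sq, ← integral_const_mul, ← integral_const_mul,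
      ← integral_sub (i1 (by fun_prop)) (i1 (by fun_prop)),
      ← integral_add (i1 (by fun_prop)) (i1 (by fun_prop)),
      ← integral_sub (i1 (by fun_prop)) (i1 (by fun_prop)),
      ← integral_sub (i1 (by fun_prop)) (i1 (by fun_prop))]
    refine setIntegral_congr_fun hD.measurableSet fun p hp => ?_
    linear_combination v p * heq p hp
  have h2 : 2 * ∫ p in D, v p * (g p - β * pdx χ p)
      ≤ (|β| + 1) * l2sq D v + l2sq D g + |β| * gradsq D χ := by
    rw [l2sq, l2sq, gradsq, ← integral_const_mul, ← integral_const_mul, ← integral_const_mul,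
      ← integral_add (i1 (by fun_prop)) (i1 (by fun_prop)),
      ← integral_add (i1 (by fun_prop)) (i1 (by fun_prop))]
    refine integral_mono (i1 (by fun_prop)) (i1 (by fun_prop)) fun p => ?_
    simp only
    have h3 : -(2 * (v p * pdx χ p)) * β ≤ (v p ^ 2 + pdx χ p ^ 2) * |β| := by
      refine (le_abs_self _).trans ?_
      rw [abs_mul]
      refine mul_le_mul_of_nonneg_right (abs_le.2 ⟨?_, ?_⟩) (abs_nonneg β) <;>
        nlinarith [sq_nonneg (v p - pdx χ p), sq_nonneg (v p + pdx χ p)]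
    nlinarith [sq_nonneg (v p - g p), mul_nonneg (abs_nonneg β) (sq_nonneg (pdy χ p))]
  have h3 := mul_le_mul_of_nonneg_left (gradsq_le_l2sq_lap hD hDb hL0 hL hχ hv_ hχ0 hχv)
    (abs_nonneg β)
  have h4 := mul_nonneg hr (l2sq_nonneg D v)
  rw [integral_mul_lap hD hDb hv hv0, integral_jac_mul_self hD hDb hψ hv hv0] at h1
  rw [h1]
  linarith

end Integral

theorem integral_gradsq_le {D : Set (ℝ × ℝ)} (hD : IsOpen D) (hDb : Bornology.IsBounded D)
    {L β ν r T : ℝ} (hL0 : 0 < L) (hL : ∀ p ∈ D, |p.1| ≤ L) (hν : 0 < ν) (hr : 0 < r)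
    (hT : 0 < T) {f Q Ψ s : ℝ → ℝ × ℝ → ℝ} (hf : MeanSquareIntegrable D f)
    (hQ : SmoothField Q) (hΨ : SmoothField Ψ) (hs : SmoothField s)
    (hsol : SolvesBVE D β ν r Q Ψ f s) :
    ∫ t in (0:ℝ)..T, gradsq D (Q t) ≤ exp ((|β| * (4 * L ^ 2 + 1) + 1) * T) / (2 * ν) *
      (l2sq D (Q 0) + 2 * (∫ t in (0:ℝ)..T, l2sq D (f t))
        + 2 * ∫ t in (0:ℝ)..T, l2sq D (s t)) := by
  set K := |β| * (4 * L ^ 2 + 1) + 1 with hK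
  have hK0 : 0 ≤ K := by positivity
  obtain ⟨hlap, hbd, heq⟩ := hsol
  let H : ℝ → ℝ × ℝ → ℝ := fun t p => deriv (fun s => Q s p) t + jac (Ψ t) (Q t) p
    + β * pdx (Ψ t) p - ν * lap (Q t) p + r * Q t p
  have hH : SmoothField H :=
    (((hQ.deriv_time.add (hΨ.jac hQ)).add (hΨ.pdx.const_mul β)).sub (hQ.lap.const_mul ν)).add
      (hQ.const_mul r)
  have hHs : ∀ t ∈ Set.Icc 0 T, l2sq D (H t) ≤ 2 * l2sq D (f t) + 2 * l2sq D (s t) := by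
    intro t ht
    have hsc := (hs.slice t).continuous
    have hHc := (hH.slice t).continuous
    have i1 := (hf.1 t ht.1).const_mul 2
    have i2 : IntegrableOn (fun p => 2 * s t p ^ 2) D :=
      integrableOn_of_continuous hDb (by fun_prop)
    rw [l2sq, l2sq, l2sq, ← integral_const_mul, ← integral_const_mul, ← integral_add i1 i2]
    refine setIntegral_mono_on (integrableOn_of_continuous hDb (by fun_prop)) (i1.add i2)
      hD.measurableSet fun p hp => ?_
    have : H t p = f t p + s t p := by linear_combination heq t ht.1 p hp
    rw [this]
    nlinarith [sq_nonneg (f t p - s t p)]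
  have hE := gronwall_dissipation (T := T) (k := fun _ => K) (h := fun t => l2sq D (H t))
    (g := fun t => 2 * ν * gradsq D (Q t)) (fun t => hQ.hasDerivAt_l2sq hDb hD t)
    continuous_const (hH.continuous_l2sq hDb hD)
    ((hQ.continuous_gradsq hDb hD).const_mul _) (fun _ => hK0) (fun _ => l2sq_nonneg _ _)
    (fun _ => mul_nonneg (by positivity) (gradsq_nonneg _ _)) (fun t ht => by
      have := energy_le (N := fun _ => 0) (g := H t) (ν := ν) (β := β) hD hDb hL0 hL hr.le (hQ.slice t)
        (hΨ.slice t) (hΨ.slice t) continuous_const (hH.slice t).continuous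
        (fun p hp => (hbd t ht.1 p hp).1) (fun p hp => (hbd t ht.1 p hp).2)
        (hlap t ht.1) (v' := fun p => deriv (fun s => Q s p) t)
        (fun p _ => by simp only [H]; ring)
      simpa using this) (Set.right_mem_Icc.2 hT.le)
  have hHint : ∫ t in (0:ℝ)..T, l2sq D (H t)
      ≤ 2 * (∫ t in (0:ℝ)..T, l2sq D (f t)) + 2 * ∫ t in (0:ℝ)..T, l2sq D (s t) := by
    have i1 := (hf.2 T hT).const_mul 2
    have i2 := ((hs.continuous_l2sq hDb hD).const_mul 2).intervalIntegrable (μ := volume) 0 T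
    rw [← intervalIntegral.integral_const_mul, ← intervalIntegral.integral_const_mul,
      ← intervalIntegral.integral_add i1 i2]
    exact intervalIntegral.integral_mono_on hT.le
      ((hH.continuous_l2sq hDb hD).intervalIntegrable _ _) (i1.add i2) hHs
  have hpos : 0 ≤ exp (-∫ _ in (0:ℝ)..T, K) * l2sq D (Q T) :=
    mul_nonneg (exp_pos _).le (l2sq_nonneg _ _)
  have hexp : exp (K * T) * exp (-(K * T)) = 1 := by rw [← exp_add]; simp
  simp only [intervalIntegral.integral_const, intervalIntegral.integral_const_mul, sub_zero,
    smul_eq_mul, mul_comm T K] at hE hpos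
  have h1 : exp (-(K * T)) * (2 * ν * ∫ t in (0:ℝ)..T, gradsq D (Q t))
      ≤ l2sq D (Q 0) + 2 * (∫ t in (0:ℝ)..T, l2sq D (f t))
        + 2 * ∫ t in (0:ℝ)..T, l2sq D (s t) := by linarith
  calc _ = exp (K * T) / (2 * ν)
        * (exp (-(K * T)) * (2 * ν * ∫ t in (0:ℝ)..T, gradsq D (Q t))) := by
        field_simp
        linear_combination (-∫ t in (0:ℝ)..T, gradsq D (Q t)) * hexp
    _ ≤ _ := by gcongr

theorem l2sq_sub_le {D : Set (ℝ × ℝ)} (hD : IsOpen D) (hDb : Bornology.IsBounded D)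
    {L β ν r T : ℝ} (hL0 : 0 < L) (hL : ∀ p ∈ D, |p.1| ≤ L) (hν : 0 < ν) (hr : 0 < r)
    {f q ψ Q Ψ R s : ℝ → ℝ × ℝ → ℝ} (hq : SmoothField q) (hψ : SmoothField ψ)
    (hQ : SmoothField Q) (hΨ : SmoothField Ψ) (hR : SmoothField R) (hs : SmoothField s)
    (hsol : SolvesBVE D β ν r q ψ f R) (hsol' : SolvesBVE D β ν r Q Ψ f s)
    (h0 : q 0 = Q 0) {t : ℝ} (ht : t ∈ Set.Icc 0 T) :
    l2sq D (fun p => q t p - Q t p) ≤ exp ((|β| * (4 * L ^ 2 + 1) + 1) * T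
      + 2 * L ^ 2 / ν * ∫ t in (0:ℝ)..T, gradsq D (Q t)) *
        ∫ t in (0:ℝ)..T, l2sq D (fun p => R t p - s t p) := by
  set K := |β| * (4 * L ^ 2 + 1) + 1 with hK
  have hK0 : 0 ≤ K := by positivity
  obtain ⟨hlap, hbd, heq⟩ := hsol
  obtain ⟨hlap', hbd', heq'⟩ := hsol'
  have hw := hq.sub hQ
  have hφ := hψ.sub hΨ
  have hRs := hR.sub hs
  let k : ℝ → ℝ := fun t => K + 2 * L ^ 2 / ν * gradsq D (Q t)
  have hk : Continuous k := continuous_const.add ((hQ.continuous_gradsq hDb hD).const_mul _)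
  have hk0 : ∀ t, 0 ≤ k t := fun t =>
    add_nonneg hK0 (mul_nonneg (by positivity) (gradsq_nonneg _ _))
  have hRsc := hRs.continuous_l2sq hDb hD
  have hle : ∀ t ∈ Set.Icc 0 T,
      2 * ∫ p in D, (q t p - Q t p) * deriv (fun s => q s p - Q s p) t
        ≤ k t * l2sq D (fun p => q t p - Q t p) + l2sq D (fun p => R t p - s t p) - 0 := by
    intro t ht
    have hw0 : ∀ p ∈ frontier D, q t p - Q t p = 0 := fun p hp => by
      rw [(hbd t ht.1 p hp).1, (hbd' t ht.1 p hp).1, sub_zero]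
    have hφ0 : ∀ p ∈ frontier D, ψ t p - Ψ t p = 0 := fun p hp => by
      rw [(hbd t ht.1 p hp).2, (hbd' t ht.1 p hp).2, sub_zero]
    have hφw : ∀ p ∈ D, q t p - Q t p = lap (fun p => ψ t p - Ψ t p) p := fun p hp => by
      rw [lap_sub (hψ.slice t) (hΨ.slice t), hlap t ht.1 p hp, hlap' t ht.1 p hp]
    have h1 := energy_le (ν := ν) (ψ := ψ t) (N := jac (fun p => ψ t p - Ψ t p) (Q t)) hD hDb hL0
      hL hr.le (hw.slice t) (hφ.slice t) (hψ.slice t) (hφ.jac hQ |>.slice t).continuous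
      (hRs.slice t).continuous hw0 hφ0 hφw
      (v' := fun p => deriv (fun s => q s p - Q s p) t) (β := β) (fun p hp => by
        have hd : deriv (fun s => q s p - Q s p) t
            = deriv (fun s => q s p) t - deriv (fun s => Q s p) t :=
          deriv_fun_sub (hq.hasDerivAt_time t p).differentiableAt
            (hQ.hasDerivAt_time t p).differentiableAt
        rw [hd, lap_sub (hq.slice t) (hQ.slice t)]
        simp only [jac, pdx_sub (hq.slice t) (hQ.slice t), pdy_sub (hq.slice t) (hQ.slice t),
          pdx_sub (hψ.slice t) (hΨ.slice t), pdy_sub (hψ.slice t) (hΨ.slice t)]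
        have e1 := heq t ht.1 p hp
        have e2 := heq' t ht.1 p hp
        simp only [jac] at e1 e2
        linear_combination e1 - e2)
    have h2 := wente hD hDb (hφ.slice t) hφ0 (hQ.slice t) (fun p hp => (hbd' t ht.1 p hp).1)
      (hw.slice t) hw0
    have h3 := gradsq_le_l2sq_lap hD hDb hL0 hL (hφ.slice t) (hw.slice t).continuous hφ0 hφw
    rw [← hK] at h1
    simp only [k]
    generalize (∫ p in D, jac (fun p => ψ t p - Ψ t p) (Q t) p * (q t p - Q t p)) = X at h1 h2
    have ha := gradsq_nonneg D (fun p => ψ t p - Ψ t p)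
    have hb := gradsq_nonneg D (Q t)
    have hc := gradsq_nonneg D (fun p => q t p - Q t p)
    generalize gradsq D (fun p => ψ t p - Ψ t p) = a at *
    generalize gradsq D (Q t) = b at *
    generalize gradsq D (fun p => q t p - Q t p) = c at *
    generalize l2sq D (fun p => q t p - Q t p) = e at *
    have h4 : |2 * X| ≤ 2 * ν * c + a * b / (2 * ν) := by
      refine abs_le_of_sq_le_sq ?_ (by positivity)
      have : (2 * ν * c + a * b / (2 * ν)) ^ 2
          = (2 * ν * c - a * b / (2 * ν)) ^ 2 + 4 * (a * b * c) := by field_simp; ring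
      rw [this]
      nlinarith [sq_nonneg (2 * ν * c - a * b / (2 * ν))]
    have h5 : a * b / (2 * ν) ≤ 2 * L ^ 2 / ν * b * e := by
      calc a * b / (2 * ν) ≤ (4 * L ^ 2 * e) * b / (2 * ν) := by gcongr
        _ = _ := by field_simp; ring
    linarith [neg_le_of_abs_le h4]
  have hG := gronwall_dissipation (g := fun _ => 0) (fun t => hw.hasDerivAt_l2sq hDb hD t)
    hk hRsc continuous_const hk0 (fun _ => l2sq_nonneg _ _) (fun _ => le_rfl) hle ht
  have hz : l2sq D (fun p => q 0 p - Q 0 p) = 0 := by simp [h0, l2sq]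
  rw [hz] at hG
  simp only [intervalIntegral.integral_zero, mul_zero, add_zero, zero_add] at hG
  have hkT : ∫ t in (0:ℝ)..T, k t = K * T + 2 * L ^ 2 / ν * ∫ t in (0:ℝ)..T, gradsq D (Q t) := by
    simp only [k]
    rw [intervalIntegral.integral_add (by simp)
      (((hQ.continuous_gradsq hDb hD).const_mul _).intervalIntegrable _ _),
      intervalIntegral.integral_const_mul]
    simp [mul_comm]
  have hkt : ∫ s in (0:ℝ)..t, k s ≤ ∫ s in (0:ℝ)..T, k s :=
    intervalIntegral.integral_mono_interval le_rfl ht.1 ht.2 (Eventually.of_forall hk0)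
      (hk.intervalIntegrable _ _)
  have hht : ∫ s' in (0:ℝ)..t, l2sq D (fun p => R s' p - s s' p)
      ≤ ∫ s' in (0:ℝ)..T, l2sq D (fun p => R s' p - s s' p) :=
    intervalIntegral.integral_mono_interval le_rfl ht.1 ht.2
      (Eventually.of_forall fun _ => l2sq_nonneg _ _) (hRsc.intervalIntegrable _ _)
  rw [← hkT]
  calc l2sq D (fun p => q t p - Q t p)
      = exp (∫ s in (0:ℝ)..t, k s)
        * (exp (-∫ s in (0:ℝ)..t, k s) * l2sq D (fun p => q t p - Q t p)) := by
        rw [← mul_assoc, ← exp_add, add_neg_cancel, exp_zero, one_mul]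
    _ ≤ _ := by
        refine mul_le_mul (exp_le_exp.2 hkt) (hG.trans hht) ?_ (exp_pos _).le
        exact mul_nonneg (exp_pos _).le (l2sq_nonneg _ _)

/-- deterministic/pathwise form of Theorem 1(i).
Fix `T > 0`. Let `q̄` solve the filtered equation with forcing `f̄` and SGS term `R`,
and `Q` solve the same equation with forcing `f̄` and parameterization term `s`,
both with zero boundary conditions and the same initial datum `q̄₀`, where
`∫₀ᵀ ‖s(t)‖² dt ≤ M`. Then there is a constant `C = C(ν, r, q̄₀, T, M, f̄) > 0`
such that for all `0 ≤ t ≤ T`,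
`‖q̄(t) - Q(t)‖² ≤ C ∫₀ᵀ ‖R(t) - s(t)‖² dt`. -/
theorem pathwise_approximation
    (D : Set (ℝ × ℝ)) (hD : IsOpen D) (hDb : Bornology.IsBounded D)
    (β ν r : ℝ) (hν : 0 < ν) (hr : 0 < r)
    (T : ℝ) (hT : 0 < T)
    (qbar₀ : ℝ × ℝ → ℝ) (fbar : ℝ → ℝ × ℝ → ℝ)
    (hfbar : MeanSquareIntegrable D fbar)
    (M : ℝ) (hM : 0 < M) :
    ∃ C > 0,
      ∀ qbar ψbar Q Ψ R s : ℝ → ℝ × ℝ → ℝ,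
        SmoothField qbar → SmoothField ψbar → SmoothField Q → SmoothField Ψ →
        SmoothField R → SmoothField s →
        SolvesBVE D β ν r qbar ψbar fbar R →
        SolvesBVE D β ν r Q Ψ fbar s →
        qbar 0 = qbar₀ → Q 0 = qbar₀ →
        (∫ t in (0:ℝ)..T, l2sq D (s t)) ≤ M →
        ∀ t ∈ Set.Icc (0:ℝ) T,
          l2sq D (fun p => qbar t p - Q t p) ≤
            C * ∫ t in (0:ℝ)..T, l2sq D (fun p => R t p - s t p) := by
  obtain ⟨L, hL0, hL'⟩ := hDb.exists_pos_norm_le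
  have hL : ∀ p ∈ D, |p.1| ≤ L := fun p hp => (norm_fst_le p).trans (hL' p hp)
  refine ⟨exp ((|β| * (4 * L ^ 2 + 1) + 1) * T + 2 * L ^ 2 / ν *
    (exp ((|β| * (4 * L ^ 2 + 1) + 1) * T) / (2 * ν) *
      (l2sq D qbar₀ + 2 * (∫ t in (0:ℝ)..T, l2sq D (fbar t)) + 2 * M))), exp_pos _, ?_⟩
  intro qbar ψbar Q Ψ R s hq hψ hQ hΨ hR hs hsol hsol' hq0 hQ0 hsM t ht
  refine (l2sq_sub_le hD hDb hL0 hL hν hr hq hψ hQ hΨ hR hs hsol hsol'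
    (hq0.trans hQ0.symm) ht).trans ?_
  refine mul_le_mul_of_nonneg_right (exp_le_exp.2 ?_)
    (intervalIntegral.integral_nonneg hT.le fun _ _ => l2sq_nonneg _ _)
  have h := integral_gradsq_le hD hDb hL0 hL hν hr hT hfbar hQ hΨ hs hsol'
  rw [hQ0] at h
  gcongr
  exact h.trans (by gcongr)
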